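/- Let X be a cyclic finite-dimensional smooth T-module and M a TS-module of finite length and degree one. Then every TS-morphism φ : 𝔼[X] → M either has finite-dimensional image contained in κ(M) = M^S, or is injective. If φ is injective, then the induced map π_0(φ) : π_0(𝔼[X]) → π_0(M) is injective and the cokernel of φ is isomorphic to the cokernel of π_0(φ). -/

import Mathlib

noncomputable section

open scoped Classical

namespace PSW

/-! ### The affine group `λ.b : x ↦ λ·x + b` over a field `K`. -/

@[ext]
structure Aff (K : Type*) [Field K] where
  t : Kˣ
  s : K

namespace Aff

variable {K : Type*} [Field K]

instance : Mul (Aff K) := ⟨fun g h => ⟨g.t * h.t, g.s + (g.t : K) * h.s⟩⟩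
instance : One (Aff K) := ⟨⟨1, 0⟩⟩
instance : Inv (Aff K) := ⟨fun g => ⟨g.t⁻¹, -(((g.t⁻¹ : Kˣ) : K) * g.s)⟩⟩

@[simp] lemma mul_t (g h : Aff K) : (g * h).t = g.t * h.t := rfl
@[simp] lemma mul_s (g h : Aff K) : (g * h).s = g.s + (g.t : K) * h.s := rfl
@[simp] lemma one_t : (1 : Aff K).t = 1 := rfl
@[simp] lemma one_s : (1 : Aff K).s = 0 := rfl
@[simp] lemma inv_t (g : Aff K) : (g⁻¹).t = g.t⁻¹ := rfl
@[simp] lemma inv_s (g : Aff K) : (g⁻¹).s = -(((g.t⁻¹ : Kˣ) : K) * g.s) := rfl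

instance : Group (Aff K) where
  mul_assoc a b c := by
    ext
    · simp [mul_assoc]
    · simp only [mul_s, mul_t, Units.val_mul]; ring
  one_mul a := by ext <;> simp
  mul_one a := by ext <;> simp
  inv_mul_cancel a := by
    ext
    · simp
    · simp

/-- The element `x_λ` of the group `TS`. -/
def xT (u : Kˣ) : Aff K := ⟨u, 0⟩

/-- The element `s_b` of the group `TS`. -/
def sS (b : K) : Aff K := ⟨1, b⟩

@[simp] lemma xT_t (u : Kˣ) : (xT u : Aff K).t = u := rfl
@[simp] lemma xT_s (u : Kˣ) : (xT u : Aff K).s = 0 := rfl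
@[simp] lemma sS_t (b : K) : (sS b : Aff K).t = 1 := rfl
@[simp] lemma sS_s (b : K) : (sS b : Aff K).s = b := rfl

/-- `T ≅ k^×` as a subgroup of `TS`. -/
def xTHom : Kˣ →* Aff K where
  toFun := xT
  map_one' := rfl
  map_mul' u v := by ext <;> simp [xT]

@[simp] lemma xTHom_apply (u : Kˣ) : (xTHom u : Aff K) = xT u := rfl

lemma mul_sS (g : Aff K) (b : K) : g * sS b = sS ((g.t : K) * b) * g := by
  ext
  · simp
  · simp [add_comm]

lemma sS_mul (b : K) (g : Aff K) : sS b * g = g * sS (((g.t⁻¹ : Kˣ) : K) * b) := by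
  ext
  · simp
  · simp [Units.mul_inv_cancel_left, add_comm]

lemma aff_decomp (g : Aff K) : g = xT g.t * sS (((g.t⁻¹ : Kˣ) : K) * g.s) := by
  ext
  · simp
  · simp [Units.mul_inv_cancel_left]

instance [TopologicalSpace K] : TopologicalSpace (Aff K) :=
  TopologicalSpace.induced (fun g : Aff K => ((g.t, g.s) : Kˣ × K)) inferInstance

end Aff

/-! ### Generalities on representations of a monoid on complex vector spaces. -/

namespace GRep

variable {G : Type*} [Monoid G]

section MonoidModules

variable {V W : Type*} [AddCommMonoid V] [Module ℂ V] [AddCommMonoid W] [Module ℂ W]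

/-- A submodule invariant under the representation. -/
def Invariant (ρ : Representation ℂ G V) (U : Submodule ℂ V) : Prop :=
  ∀ (g : G) (v : V), v ∈ U → ρ g v ∈ U

/-- Equivariance of a linear map with respect to two representations. -/
def Equivariant (ρ : Representation ℂ G V) (σ : Representation ℂ G W) (f : V →ₗ[ℂ] W) : Prop :=
  ∀ (g : G) (v : V), f (ρ g v) = σ g (f v)

/-- Isomorphism of representations. -/
def Iso (ρ : Representation ℂ G V) (σ : Representation ℂ G W) : Prop :=
  ∃ e : V ≃ₗ[ℂ] W, ∀ (g : G) (v : V), e (ρ g v) = σ g (e v)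

/-- Irreducibility. -/
def Irred (ρ : Representation ℂ G V) : Prop :=
  Nontrivial V ∧ ∀ U : Submodule ℂ V, Invariant ρ U → U = ⊥ ∨ U = ⊤

/-- Subrepresentation on an invariant submodule. -/
def sub (ρ : Representation ℂ G V) {U : Submodule ℂ V} (hU : Invariant ρ U) :
    Representation ℂ G ↥U where
  toFun g := (ρ g).restrict fun v hv => hU g v hv
  map_one' := by
    apply LinearMap.ext; intro v; apply Subtype.ext
    simp [LinearMap.restrict_apply]
  map_mul' g h := by
    apply LinearMap.ext; intro v; apply Subtype.ext
    simp [LinearMap.restrict_apply]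

@[simp] lemma sub_apply (ρ : Representation ℂ G V) {U : Submodule ℂ V} (hU : Invariant ρ U)
    (g : G) (v : ↥U) : ((sub ρ hU g v : ↥U) : V) = ρ g (v : V) := rfl

lemma ker_invariant (ρ : Representation ℂ G V) (σ : Representation ℂ G W)
    (f : V →ₗ[ℂ] W) (hf : Equivariant ρ σ f) : Invariant ρ (LinearMap.ker f) := by
  intro g v hv
  rw [LinearMap.mem_ker] at hv ⊢
  rw [hf g v, hv, map_zero]

lemma range_invariant (ρ : Representation ℂ G V) (σ : Representation ℂ G W)
    (f : V →ₗ[ℂ] W) (hf : Equivariant ρ σ f) : Invariant σ (LinearMap.range f) := by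
  rintro g w ⟨v, rfl⟩
  exact ⟨ρ g v, hf g v⟩

lemma map_invariant (ρ : Representation ℂ G V) (σ : Representation ℂ G W)
    (f : V →ₗ[ℂ] W) (hf : Equivariant ρ σ f) (U : Submodule ℂ V) (hU : Invariant ρ U) :
    Invariant σ (U.map f) := by
  rintro g w ⟨v, hv, rfl⟩
  exact ⟨ρ g v, hU g v hv, hf g v⟩

end MonoidModules

section GroupModules

variable {V W : Type*} [AddCommGroup V] [Module ℂ V] [AddCommGroup W] [Module ℂ W]

/-- Quotient representation. -/
def quot (ρ : Representation ℂ G V) (U : Submodule ℂ V) (hU : Invariant ρ U) :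
    Representation ℂ G (V ⧸ U) where
  toFun g := U.mapQ U (ρ g) fun v hv => hU g v hv
  map_one' := by
    apply LinearMap.ext; intro x
    obtain ⟨v, rfl⟩ := Submodule.Quotient.mk_surjective U x
    simp [Submodule.mapQ_apply]
  map_mul' g h := by
    apply LinearMap.ext; intro x
    obtain ⟨v, rfl⟩ := Submodule.Quotient.mk_surjective U x
    simp [Submodule.mapQ_apply]

@[simp] lemma quot_apply (ρ : Representation ℂ G V) (U : Submodule ℂ V) (hU : Invariant ρ U)
    (g : G) (v : V) :
    quot ρ U hU g (Submodule.Quotient.mk v) = Submodule.Quotient.mk (ρ g v) := rfl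

/-- Subquotient representation on `B/A`. -/
def subquot (ρ : Representation ℂ G V) {A B : Submodule ℂ V}
    (hA : Invariant ρ A) (hB : Invariant ρ B) :
    Representation ℂ G (↥B ⧸ A.comap B.subtype) :=
  quot (sub ρ hB) (A.comap B.subtype) fun g v hv => hA g v.1 hv

lemma mkQ_equivariant (ρ : Representation ℂ G V) (U : Submodule ℂ V) (hU : Invariant ρ U) :
    Equivariant ρ (quot ρ U hU) U.mkQ := by
  intro g v
  show Submodule.Quotient.mk (ρ g v) = quot ρ U hU g (Submodule.Quotient.mk v)
  rw [quot_apply]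

end GroupModules

end GRep

/-! ### TS-modules: representations of the affine group. -/

/-- A `TS`-module structure on `V` is a representation of the group `TS ≅ Gl_a(1)`. -/
abbrev Rep (K : Type*) [Field K] (V : Type*) [AddCommGroup V] [Module ℂ V] :=
  Representation ℂ (Aff K) V

section RepDefs

open Aff

variable {K : Type*} [Field K]
variable {V W : Type*} [AddCommGroup V] [Module ℂ V] [AddCommGroup W] [Module ℂ W]

/-- Smoothness: every vector has open stabilizer. -/
def IsSmoothRep [TopologicalSpace K] (ρ : Rep K V) : Prop :=
  ∀ v : V, IsOpen {g : Aff K | ρ g v = v}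

/-- Smoothness of a `T`-module, i.e. of a representation of `T ≅ k^×`. -/
def TIsSmooth {X : Type*} [AddCommMonoid X] [Module ℂ X] [TopologicalSpace K]
    (τ : Representation ℂ Kˣ X) : Prop :=
  ∀ x : X, IsOpen {u : Kˣ | τ u x = x}

/-- Smooth character of `T ≅ k^×` (open kernel, equivalently locally constant). -/
def SmoothMulChar [TopologicalSpace K] (χ : Kˣ →* ℂˣ) : Prop :=
  IsOpen {u : Kˣ | χ u = 1}

/-- The space `V^S` of `S`-invariants. -/
def sInv (ρ : Rep K V) : Submodule ℂ V where
  carrier := {v | ∀ b : K, ρ (sS b) v = v}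
  zero_mem' := fun b => map_zero _
  add_mem' {a b} ha hb := fun c => by rw [map_add, ha c, hb c]
  smul_mem' c v hv := fun b => by rw [map_smul, hv b]

@[simp] lemma mem_sInv (ρ : Rep K V) (v : V) :
    v ∈ sInv ρ ↔ ∀ b : K, ρ (sS b) v = v := Iff.rfl

/-- The `χ`-eigenspace `X^{T,χ}` of a `T`-module. -/
def tEigenT {X : Type*} [AddCommMonoid X] [Module ℂ X]
    (τ : Representation ℂ Kˣ X) (χ : Kˣ →* ℂˣ) : Submodule ℂ X where
  carrier := {x | ∀ u : Kˣ, τ u x = (χ u : ℂ) • x}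
  zero_mem' := fun u => by simp
  add_mem' {a b} ha hb := fun u => by rw [map_add, ha u, hb u, smul_add]
  smul_mem' c x hx := fun u => by rw [map_smul, hx u]; exact smul_comm c ((χ u : ℂ)) x

@[simp] lemma mem_tEigenT {X : Type*} [AddCommMonoid X] [Module ℂ X]
    (τ : Representation ℂ Kˣ X) (χ : Kˣ →* ℂˣ) (x : X) :
    x ∈ tEigenT τ χ ↔ ∀ u : Kˣ, τ u x = (χ u : ℂ) • x := Iff.rfl

/-- The `χ`-eigenspace `V^{T,χ}` of a `TS`-module. -/
def tEigen (ρ : Rep K V) (χ : Kˣ →* ℂˣ) : Submodule ℂ V := tEigenT (ρ.comp xTHom) χ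

/-- The kernel of the projection to the `S`-coinvariants `V_S`. -/
def sCoinvKer (ρ : Rep K V) : Submodule ℂ V :=
  Submodule.span ℂ {w : V | ∃ (b : K) (v : V), w = ρ (sS b) v - v}

/-- The kernel of the projection to the twisted coinvariants `V_{S,ψ'}`. -/
def sTwistKer (ρ : Rep K V) (ψ' : AddChar K ℂ) : Submodule ℂ V :=
  Submodule.span ℂ {w : V | ∃ (b : K) (v : V), w = ρ (sS b) v - ψ' b • v}

/-- The kernel of the projection to the `χ`-coinvariants `X_{T,χ}` of a `T`-module. -/
def tTwistKerT {X : Type*} [AddCommGroup X] [Module ℂ X]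
    (τ : Representation ℂ Kˣ X) (χ : Kˣ →* ℂˣ) : Submodule ℂ X :=
  Submodule.span ℂ {w : X | ∃ (u : Kˣ) (x : X), w = τ u x - (χ u : ℂ) • x}

/-- The kernel of the projection to the `χ`-coinvariants `V_{T,χ}` of a `TS`-module. -/
def tTwistKer (ρ : Rep K V) (χ : Kˣ →* ℂˣ) : Submodule ℂ V := tTwistKerT (ρ.comp xTHom) χ

lemma sCoinvKer_invariant (ρ : Rep K V) : GRep.Invariant ρ (sCoinvKer ρ) := by
  intro g v hv
  have h : sCoinvKer ρ ≤ Submodule.comap (ρ g) (sCoinvKer ρ) := by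
    refine Submodule.span_le.2 ?_
    rintro w ⟨b, v', rfl⟩
    simp only [SetLike.mem_coe, Submodule.mem_comap, map_sub]
    have h1 : ρ g (ρ (sS b) v') = ρ (sS ((g.t : K) * b)) (ρ g v') := by
      rw [← Module.End.mul_apply, ← map_mul, mul_sS, map_mul, Module.End.mul_apply]
    rw [h1]
    exact Submodule.subset_span ⟨(g.t : K) * b, ρ g v', rfl⟩
  exact h hv

lemma sInv_invariant (ρ : Rep K V) : GRep.Invariant ρ (sInv ρ) := by
  intro g v hv
  rw [mem_sInv] at hv ⊢
  intro b
  have h1 : ρ (sS b) (ρ g v) = ρ g (ρ (sS (((g.t⁻¹ : Kˣ) : K) * b)) v) := by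
    rw [← Module.End.mul_apply, ← map_mul, sS_mul, map_mul, Module.End.mul_apply]
  rw [h1, hv _]

/-- The `S`-coinvariants `π₀(V) = V_S` as a `TS`-module (`S` acting trivially). -/
def piZeroRep (ρ : Rep K V) : Rep K (V ⧸ sCoinvKer ρ) :=
  GRep.quot ρ (sCoinvKer ρ) (sCoinvKer_invariant ρ)

/-- The `S`-coinvariants `π₀(V) = V_S` as a `T`-module. -/
def piZeroT (ρ : Rep K V) : Representation ℂ Kˣ (V ⧸ sCoinvKer ρ) :=
  (piZeroRep ρ).comp xTHom

/-- The `T`-module structure on `κ(V) = V^S`. -/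
def sInvT (ρ : Rep K V) : Representation ℂ Kˣ ↥(sInv ρ) :=
  (GRep.sub ρ (sInv_invariant ρ)).comp xTHom

/-- A `TS`-module is perfect if all its eigenspaces `V^{T,χ}` for smooth `χ` vanish. -/
def Perfect [TopologicalSpace K] (ρ : Rep K V) : Prop :=
  ∀ χ : Kˣ →* ℂˣ, SmoothMulChar χ → tEigen ρ χ = ⊥

/-- A finite-dimensional `T`-module is cyclic if each generalized eigenspace is a single
Jordan block; equivalently all eigenspaces `X^{T,χ}` have dimension at most one. -/
def TCyclic {X : Type*} [AddCommGroup X] [Module ℂ X]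
    (τ : Representation ℂ Kˣ X) : Prop :=
  ∀ χ : Kˣ →* ℂˣ, Module.finrank ℂ ↥(tEigenT τ χ) ≤ 1

lemma sCoinvKer_le_comap (ρ : Rep K V) (σ : Rep K W)
    (f : V →ₗ[ℂ] W) (hf : GRep.Equivariant ρ σ f) :
    sCoinvKer ρ ≤ (sCoinvKer σ).comap f := by
  refine Submodule.span_le.2 ?_
  rintro w ⟨b, v, rfl⟩
  simp only [SetLike.mem_coe, Submodule.mem_comap, map_sub]
  rw [hf]
  exact Submodule.subset_span ⟨b, f v, rfl⟩

/-- The map induced by an equivariant map on the `S`-coinvariants `π₀`. -/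
def piZeroMap (ρ : Rep K V) (σ : Rep K W) (f : V →ₗ[ℂ] W) (hf : GRep.Equivariant ρ σ f) :
    (V ⧸ sCoinvKer ρ) →ₗ[ℂ] (W ⧸ sCoinvKer σ) :=
  Submodule.mapQ _ _ f (sCoinvKer_le_comap ρ σ f hf)

lemma piZeroMap_equivariant (ρ : Rep K V) (σ : Rep K W) (f : V →ₗ[ℂ] W)
    (hf : GRep.Equivariant ρ σ f) :
    GRep.Equivariant (piZeroRep ρ) (piZeroRep σ) (piZeroMap ρ σ f hf) := by
  intro g x
  obtain ⟨v, rfl⟩ := Submodule.Quotient.mk_surjective _ x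
  show piZeroMap ρ σ f hf (piZeroRep ρ g (Submodule.Quotient.mk v))
      = piZeroRep σ g (piZeroMap ρ σ f hf (Submodule.Quotient.mk v))
  rw [show piZeroRep ρ g (Submodule.Quotient.mk v) = Submodule.Quotient.mk (ρ g v) from rfl]
  rw [show piZeroMap ρ σ f hf (Submodule.Quotient.mk v) = Submodule.Quotient.mk (f v) from rfl]
  rw [show piZeroMap ρ σ f hf (Submodule.Quotient.mk (ρ g v))
      = Submodule.Quotient.mk (f (ρ g v)) from rfl]
  rw [show piZeroRep σ g (Submodule.Quotient.mk (f v)) = Submodule.Quotient.mk (σ g (f v)) from rfl]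
  rw [hf]

lemma kappaImg_invariant (ρ : Rep K V) :
    GRep.Invariant (piZeroT ρ) ((sInv ρ).map (sCoinvKer ρ).mkQ) := by
  rintro u w ⟨v, hv, rfl⟩
  refine ⟨ρ (xT u) v, sInv_invariant ρ (xT u) v hv, ?_⟩
  rfl

end RepDefs

/-! ### Composition series and degree. -/

/-- A composition series for a `TS`-module, witnessing finite length: a maximal chain of
invariant submodules (the subquotients are then irreducible). -/
structure CompSeries {K : Type*} [Field K] {V : Type*} [AddCommGroup V] [Module ℂ V]
    (ρ : Rep K V) where
  n : ℕ
  W : ℕ → Submodule ℂ V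
  bot : W 0 = ⊥
  top : W n = ⊤
  inv : ∀ i, GRep.Invariant ρ (W i)
  lt : ∀ i < n, W i < W (i + 1)
  maximal : ∀ i < n, ∀ C : Submodule ℂ V, GRep.Invariant ρ C → W i ≤ C → C ≤ W (i + 1) →
    C = W i ∨ C = W (i + 1)

/-- The number of Jordan–Hölder constituents of a composition series isomorphic to a given
representation `σ` (applied with `σ = 𝕊`, this is the degree). -/
def CompSeries.deg {K : Type*} [Field K] {V : Type*} [AddCommGroup V] [Module ℂ V]
    {ρ : Rep K V} (c : CompSeries ρ) {W₀ : Type*} [AddCommMonoid W₀] [Module ℂ W₀]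
    (σ : Representation ℂ (Aff K) W₀) : ℕ :=
  (Finset.univ.filter fun i : Fin c.n =>
    GRep.Iso (GRep.subquot ρ (c.inv i.1) (c.inv (i.1 + 1))) σ).card

/-! ### Fiber products of a `T`-module with a `TS`-module over a `T`-module. -/

section Fiber

open Aff

variable {K : Type*} [Field K]
variable {X Y E : Type*} [AddCommGroup X] [Module ℂ X] [AddCommGroup Y] [Module ℂ Y]
  [AddCommGroup E] [Module ℂ E]

/-- The product `TS`-module `X × E` where `S` acts trivially on the `T`-module `X`. -/
def prodRepTE (τ : Representation ℂ Kˣ X) (ρ : Rep K E) : Rep K (X × E) where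
  toFun g := (τ g.t).prodMap (ρ g)
  map_one' := by
    apply LinearMap.ext; rintro ⟨x, v⟩
    simp
  map_mul' g h := by
    apply LinearMap.ext; rintro ⟨x, v⟩
    simp [map_mul]

/-- The underlying space of the fiber product `𝔼[f] = X ×_Y E`. -/
def fiberKer (f : X →ₗ[ℂ] Y) (q : E →ₗ[ℂ] Y) : Submodule ℂ (X × E) :=
  LinearMap.ker (f.comp (LinearMap.fst ℂ X E) - q.comp (LinearMap.snd ℂ X E))

lemma mem_fiberKer (f : X →ₗ[ℂ] Y) (q : E →ₗ[ℂ] Y) (p : X × E) :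
    p ∈ fiberKer f q ↔ f p.1 = q p.2 := by
  simp [fiberKer, sub_eq_zero]

lemma fiber_invariant (τX : Representation ℂ Kˣ X) (ρE : Rep K E)
    (τY : Representation ℂ Kˣ Y) (f : X →ₗ[ℂ] Y) (q : E →ₗ[ℂ] Y)
    (hf : ∀ (u : Kˣ) (x : X), f (τX u x) = τY u (f x))
    (hq : sCoinvKer ρE ≤ LinearMap.ker q)
    (hqT : ∀ (u : Kˣ) (v : E), q (ρE (xT u) v) = τY u (q v)) :
    GRep.Invariant (prodRepTE τX ρE) (fiberKer f q) := by
  intro g p hp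
  rw [mem_fiberKer] at hp ⊢
  have hsb : q (ρE (sS (((g.t⁻¹ : Kˣ) : K) * g.s)) p.2) = q p.2 := by
    have h1 : ρE (sS (((g.t⁻¹ : Kˣ) : K) * g.s)) p.2 - p.2 ∈ sCoinvKer ρE :=
      Submodule.subset_span ⟨_, _, rfl⟩
    have h2 := hq h1
    rw [LinearMap.mem_ker, map_sub, sub_eq_zero] at h2
    exact h2
  have hdecomp : ρE g p.2 = ρE (xT g.t) (ρE (sS (((g.t⁻¹ : Kˣ) : K) * g.s)) p.2) := by
    conv_lhs => rw [aff_decomp g]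
    rw [map_mul, Module.End.mul_apply]
  have h1 : ((prodRepTE τX ρE) g p).1 = τX g.t p.1 := rfl
  have h2 : ((prodRepTE τX ρE) g p).2 = ρE g p.2 := rfl
  rw [h1, h2, hf, hp, hdecomp, hqT, hsb]

end Fiber

/-! ### Jordan blocks of finite-dimensional `T`-modules. -/

section Jordan

variable {K : Type*} [Field K]
variable {X : Type*} [AddCommGroup X] [Module ℂ X]

/-- A Jordan block of a `T`-module: a nonzero indecomposable invariant direct summand. -/
def IsJordanBlock (τ : Representation ℂ Kˣ X) (J : Submodule ℂ X) : Prop :=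
  J ≠ ⊥ ∧ GRep.Invariant τ J ∧ (∃ C : Submodule ℂ X, GRep.Invariant τ C ∧ IsCompl J C) ∧
    ∀ A B : Submodule ℂ X, GRep.Invariant τ A → GRep.Invariant τ B → A ≤ J → B ≤ J →
      A ⊓ B = ⊥ → A ⊔ B = J → A = ⊥ ∨ B = ⊥

end Jordan

/-! ### Invariants and coinvariants for a normal subgroup of an arbitrary group. -/

section Grp

variable {Γ : Type*} [Group Γ]
variable {V W : Type*} [AddCommGroup V] [Module ℂ V] [AddCommGroup W] [Module ℂ W]

/-- Invariants `V^N` under a subgroup `N`. -/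
def grpInv (ρ : Representation ℂ Γ V) (N : Subgroup Γ) : Submodule ℂ V where
  carrier := {v | ∀ n ∈ N, ρ n v = v}
  zero_mem' := fun n _ => map_zero _
  add_mem' {a b} ha hb := fun n hn => by rw [map_add, ha n hn, hb n hn]
  smul_mem' c v hv := fun n hn => by rw [map_smul, hv n hn]

@[simp] lemma mem_grpInv (ρ : Representation ℂ Γ V) (N : Subgroup Γ) (v : V) :
    v ∈ grpInv ρ N ↔ ∀ n ∈ N, ρ n v = v := Iff.rfl

/-- The kernel of the projection to the coinvariants `V_N` under a subgroup `N`. -/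
def grpCoinvKer (ρ : Representation ℂ Γ V) (N : Subgroup Γ) : Submodule ℂ V :=
  Submodule.span ℂ {w : V | ∃ n ∈ N, ∃ v : V, w = ρ n v - v}

lemma grpInv_invariant (ρ : Representation ℂ Γ V) (N : Subgroup Γ) [hN : N.Normal] :
    GRep.Invariant ρ (grpInv ρ N) := by
  intro γ v hv
  rw [mem_grpInv] at hv ⊢
  intro n hn
  have hmem : γ⁻¹ * n * γ ∈ N := by
    have := hN.conj_mem n hn γ⁻¹
    simpa using this
  have key : ρ n (ρ γ v) = ρ γ (ρ (γ⁻¹ * n * γ) v) := by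
    rw [← Module.End.mul_apply, ← map_mul, ← Module.End.mul_apply, ← map_mul]
    congr 1
    group
  rw [key, hv _ hmem]

lemma grpCoinvKer_invariant (ρ : Representation ℂ Γ V) (N : Subgroup Γ) [hN : N.Normal] :
    GRep.Invariant ρ (grpCoinvKer ρ N) := by
  intro γ v hv
  have h : grpCoinvKer ρ N ≤ Submodule.comap (ρ γ) (grpCoinvKer ρ N) := by
    refine Submodule.span_le.2 ?_
    rintro w ⟨n, hn, v', rfl⟩
    simp only [SetLike.mem_coe, Submodule.mem_comap, map_sub]
    have key : ρ γ (ρ n v') = ρ (γ * n * γ⁻¹) (ρ γ v') := by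
      rw [← Module.End.mul_apply, ← map_mul, ← Module.End.mul_apply, ← map_mul]
      congr 1
      group
    rw [key]
    exact Submodule.subset_span ⟨γ * n * γ⁻¹, hN.conj_mem n hn γ, ρ γ v', rfl⟩
  exact h hv

/-- The map induced on `N`-invariants by an equivariant map. -/
def grpInvRestrict (ρ : Representation ℂ Γ V) (σ : Representation ℂ Γ W) (N : Subgroup Γ)
    (f : V →ₗ[ℂ] W) (hf : GRep.Equivariant ρ σ f) : ↥(grpInv ρ N) →ₗ[ℂ] ↥(grpInv σ N) :=
  f.restrict (fun v hv => by
    rw [mem_grpInv] at hv ⊢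
    intro n hn
    rw [← hf n v, hv n hn])

lemma grpCoinvKer_le_comap (ρ : Representation ℂ Γ V) (σ : Representation ℂ Γ W) (N : Subgroup Γ)
    (f : V →ₗ[ℂ] W) (hf : GRep.Equivariant ρ σ f) :
    grpCoinvKer ρ N ≤ (grpCoinvKer σ N).comap f := by
  refine Submodule.span_le.2 ?_
  rintro w ⟨n, hn, v, rfl⟩
  simp only [SetLike.mem_coe, Submodule.mem_comap, map_sub]
  rw [hf]
  exact Submodule.subset_span ⟨n, hn, f v, rfl⟩

/-- The map induced on `N`-coinvariants by an equivariant map. -/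
def grpCoinvMap (ρ : Representation ℂ Γ V) (σ : Representation ℂ Γ W) (N : Subgroup Γ)
    (f : V →ₗ[ℂ] W) (hf : GRep.Equivariant ρ σ f) :
    (V ⧸ grpCoinvKer ρ N) →ₗ[ℂ] (W ⧸ grpCoinvKer σ N) :=
  Submodule.mapQ _ _ f (grpCoinvKer_le_comap ρ σ N f hf)

end Grp

/-! ### Tate L-factors of finite-dimensional `T`-modules. -/

section Lfactor

variable {K : Type*} [NontriviallyNormedField K]
variable {X : Type*} [AddCommGroup X] [Module ℂ X]

/-- The part of a `T`-module where the `χ`-twisted action is unramified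
(trivial on the norm-one units). -/
def unrPart (τ : Representation ℂ Kˣ X) (χ : Kˣ →* ℂˣ) : Submodule ℂ X where
  carrier := {x | ∀ u : Kˣ, ‖(u : K)‖ = 1 → (χ u : ℂ) • τ u x = x}
  zero_mem' := fun u _ => by simp
  add_mem' {a b} ha hb := fun u hu => by rw [map_add, smul_add, ha u hu, hb u hu]
  smul_mem' c x hx := fun u hu => by
    rw [map_smul, smul_comm, hx u hu]

lemma unrPart_stable (τ : Representation ℂ Kˣ X) (χ : Kˣ →* ℂˣ) (ϖ : Kˣ) :
    ∀ x ∈ unrPart τ χ, ((χ ϖ : ℂ) • τ ϖ) x ∈ unrPart τ χ := by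
  intro x hx u hu
  have comm : τ u (τ ϖ x) = τ ϖ (τ u x) := by
    rw [← Module.End.mul_apply, ← map_mul, mul_comm, map_mul, Module.End.mul_apply]
  calc (χ u : ℂ) • τ u (((χ ϖ : ℂ) • τ ϖ) x)
      = (χ ϖ : ℂ) • ((χ u : ℂ) • τ u (τ ϖ x)) := by
        rw [LinearMap.smul_apply, map_smul, smul_comm]
    _ = (χ ϖ : ℂ) • τ ϖ ((χ u : ℂ) • τ u x) := by rw [comm, map_smul]
    _ = ((χ ϖ : ℂ) • τ ϖ) x := by rw [hx u hu, LinearMap.smul_apply]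

/-- The twisted uniformizer action on the unramified part. -/
def twistOp (τ : Representation ℂ Kˣ X) (χ : Kˣ →* ℂˣ) (ϖ : Kˣ) :
    ↥(unrPart τ χ) →ₗ[ℂ] ↥(unrPart τ χ) :=
  LinearMap.restrict ((χ ϖ : ℂ) • τ ϖ) (unrPart_stable τ χ ϖ)

/-- The Tate `L`-factor `L(s, χ ⊗ X) = det(1 - q^{-s}·(χ·τ)(ϖ) | X^{unr,χ})⁻¹` of a
(finite-dimensional) `T`-module `X`, relative to a uniformizer `ϖ`. -/
def Lfactor (τ : Representation ℂ Kˣ X) (χ : Kˣ →* ℂˣ) (ϖ : Kˣ) (s : ℂ) : ℂ :=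
  (LinearMap.det (LinearMap.id - (‖(ϖ : K)‖ : ℂ) ^ s • twistOp τ χ ϖ))⁻¹

end Lfactor

/-! ### The concrete `TS`-modules `𝕊`, `C_c^∞(k)`, `C_b^∞(k^×)` and `𝔼[χ]`. -/

section Concrete

open Aff

variable (K : Type*) [NontriviallyNormedField K]

/-- The representation of `TS` on functions on `k^×`:
`(s_b g)(x) = ψ(bx) g(x)`, `(x_λ g)(x) = g(xλ)`. -/
def repCx (ψ : AddChar K ℂ) : Rep K (Kˣ → ℂ) where
  toFun g :=
    { toFun := fun f x => ψ (g.s * (x : K)) * f (x * g.t)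
      map_add' := fun f₁ f₂ => by funext x; simp [mul_add]
      map_smul' := fun c f => by
        funext x
        simp only [Pi.smul_apply, smul_eq_mul, RingHom.id_apply]
        ring }
  map_one' := by
    apply LinearMap.ext; intro f; funext x
    simp
  map_mul' g h := by
    apply LinearMap.ext; intro f; funext x
    show ψ ((g.s + (g.t : K) * h.s) * (x : K)) * f (x * (g.t * h.t))
        = ψ (g.s * (x : K)) * (ψ (h.s * ((x * g.t : Kˣ) : K)) * f (x * g.t * h.t))
    have harg : (g.s + (g.t : K) * h.s) * (x : K)
        = g.s * (x : K) + h.s * ((x * g.t : Kˣ) : K) := by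
      push_cast
      ring
    rw [harg, AddChar.map_add_eq_mul, ← mul_assoc x g.t h.t]
    ring

@[simp] lemma repCx_apply (ψ : AddChar K ℂ) (g : Aff K) (f : Kˣ → ℂ) (x : Kˣ) :
    repCx K ψ g f x = ψ (g.s * (x : K)) * f (x * g.t) := rfl

/-- The `χ`-twisted representation of `TS` on functions on `k`:
`(s_b g)(x) = ψ(bx) g(x)`, `(x_λ g)(x) = χ(λ) g(xλ)`.  (Take `χ = 1` for the
untwisted action on `C_c^∞(k)`; the module `𝔼[χ]` is `C_c^∞(k)` with the twisted action.) -/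
def repCc (ψ : AddChar K ℂ) (χ : Kˣ →* ℂˣ) : Rep K (K → ℂ) where
  toFun g :=
    { toFun := fun f x => (χ g.t : ℂ) * ψ (g.s * x) * f (x * (g.t : K))
      map_add' := fun f₁ f₂ => by funext x; simp [mul_add]
      map_smul' := fun c f => by
        funext x
        simp only [Pi.smul_apply, smul_eq_mul, RingHom.id_apply]
        ring }
  map_one' := by
    apply LinearMap.ext; intro f; funext x
    simp
  map_mul' g h := by
    apply LinearMap.ext; intro f; funext x
    show (χ (g.t * h.t) : ℂ) * ψ ((g.s + (g.t : K) * h.s) * x) * f (x * ((g.t * h.t : Kˣ) : K))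
        = (χ g.t : ℂ) * ψ (g.s * x) * ((χ h.t : ℂ) * ψ (h.s * (x * (g.t : K)))
            * f (x * (g.t : K) * (h.t : K)))
    have harg : (g.s + (g.t : K) * h.s) * x = g.s * x + h.s * (x * (g.t : K)) := by ring
    have harg2 : x * ((g.t * h.t : Kˣ) : K) = x * (g.t : K) * (h.t : K) := by
      push_cast
      ring
    rw [harg, harg2, AddChar.map_add_eq_mul, map_mul]
    push_cast
    ring

@[simp] lemma repCc_apply (ψ : AddChar K ℂ) (χ : Kˣ →* ℂˣ) (g : Aff K) (f : K → ℂ) (x : K) :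
    repCc K ψ χ g f x = (χ g.t : ℂ) * ψ (g.s * x) * f (x * (g.t : K)) := rfl

/-- The one-dimensional `TS`-module `ℂ_χ` on which `S` acts trivially and `x_λ` by `χ(λ)`. -/
def chiRep (χ : Kˣ →* ℂˣ) : Rep K ℂ where
  toFun g := (χ g.t : ℂ) • LinearMap.id
  map_one' := by
    apply LinearMap.ext; intro c
    simp
  map_mul' g h := by
    apply LinearMap.ext; intro c
    simp only [mul_t, map_mul, LinearMap.smul_apply, LinearMap.id_apply, Module.End.mul_apply,
      Units.val_mul, smul_eq_mul]
    ring

/-- `C_c^∞(k)`: locally constant, compactly supported functions on `k`. -/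
def CcK : Submodule ℂ (K → ℂ) where
  carrier := {f | IsLocallyConstant f ∧ HasCompactSupport f}
  zero_mem' := ⟨IsLocallyConstant.const 0, by
    rw [hasCompactSupport_def]
    simp⟩
  add_mem' {a b} ha hb := ⟨ha.1.comp₂ hb.1 (· + ·), ha.2.add hb.2⟩
  smul_mem' c f hf := by
    refine ⟨?_, hf.2.mono (Function.support_const_smul_subset c f)⟩
    exact hf.1.comp (fun z => c * z)

@[simp] lemma mem_CcK (f : K → ℂ) :
    f ∈ CcK K ↔ IsLocallyConstant f ∧ HasCompactSupport f := Iff.rfl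

/-- `𝕊 = C_c^∞(k^×)`: locally constant, compactly supported functions on `k^×`. -/
def SSx : Submodule ℂ (Kˣ → ℂ) where
  carrier := {f | IsLocallyConstant f ∧ HasCompactSupport f}
  zero_mem' := ⟨IsLocallyConstant.const 0, by
    rw [hasCompactSupport_def]
    simp⟩
  add_mem' {a b} ha hb := ⟨ha.1.comp₂ hb.1 (· + ·), ha.2.add hb.2⟩
  smul_mem' c f hf := by
    refine ⟨?_, hf.2.mono (Function.support_const_smul_subset c f)⟩
    exact hf.1.comp (fun z => c * z)

@[simp] lemma mem_SSx (f : Kˣ → ℂ) :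
    f ∈ SSx K ↔ IsLocallyConstant f ∧ HasCompactSupport f := Iff.rfl

/-- `C_b^∞(k^×)`: locally constant functions on `k^×` whose support has compact closure
in `k`. -/
def Cb : Submodule ℂ (Kˣ → ℂ) where
  carrier := {f | IsLocallyConstant f ∧
    IsCompact (closure (((↑) : Kˣ → K) '' Function.support f))}
  zero_mem' := ⟨IsLocallyConstant.const 0, by simp⟩
  add_mem' {a b} ha hb := by
    refine ⟨ha.1.comp₂ hb.1 (· + ·), ?_⟩
    refine IsCompact.of_isClosed_subset (ha.2.union hb.2) isClosed_closure ?_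
    refine closure_minimal ?_ (ha.2.isClosed.union hb.2.isClosed)
    refine (Set.image_mono (Function.support_add _ _)).trans ?_
    rw [Set.image_union]
    exact Set.union_subset_union subset_closure subset_closure
  smul_mem' c f hf := by
    refine ⟨hf.1.comp (fun z => c * z), ?_⟩
    refine IsCompact.of_isClosed_subset hf.2 isClosed_closure ?_
    refine closure_mono ?_
    exact Set.image_mono (Function.support_const_smul_subset c f)

@[simp] lemma mem_Cb (f : Kˣ → ℂ) :
    f ∈ Cb K ↔ IsLocallyConstant f ∧
      IsCompact (closure (((↑) : Kˣ → K) '' Function.support f)) := Iff.rfl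

variable {K}

lemma SSx_invariant (ψ : AddChar K ℂ) (hψlc : IsLocallyConstant (⇑ψ)) :
    GRep.Invariant (repCx K ψ) (SSx K) := by
  rintro g f hf
  rw [mem_SSx] at hf ⊢
  obtain ⟨hlc, hcs⟩ := hf
  have heq : repCx K ψ g f
      = (fun x : Kˣ => ψ (g.s * (x : K))) * (f ∘ (Homeomorph.mulRight g.t)) := rfl
  constructor
  · rw [heq]
    refine IsLocallyConstant.mul ?_ ?_
    · exact hψlc.comp_continuous (continuous_const.mul Units.continuous_val)
    · exact hlc.comp_continuous (Homeomorph.mulRight g.t).continuous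
  · rw [heq]
    exact (hcs.comp_homeomorph (Homeomorph.mulRight g.t)).mul_left

lemma CcK_invariant (ψ : AddChar K ℂ) (hψlc : IsLocallyConstant (⇑ψ)) (χ : Kˣ →* ℂˣ) :
    GRep.Invariant (repCc K ψ χ) (CcK K) := by
  rintro g f hf
  rw [mem_CcK] at hf ⊢
  obtain ⟨hlc, hcs⟩ := hf
  have hne : ((g.t : Kˣ) : K) ≠ 0 := g.t.ne_zero
  have heq : repCc K ψ χ g f
      = (fun x : K => (χ g.t : ℂ) * ψ (g.s * x)) * (f ∘ (Homeomorph.mulRight₀ (g.t : K) hne)) :=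
    rfl
  constructor
  · rw [heq]
    refine IsLocallyConstant.mul ?_ ?_
    · exact ((hψlc.comp_continuous (continuous_const.mul continuous_id)).comp
        (fun z => (χ g.t : ℂ) * z))
    · exact hlc.comp_continuous (Homeomorph.mulRight₀ (g.t : K) hne).continuous
  · rw [heq]
    exact (hcs.comp_homeomorph (Homeomorph.mulRight₀ (g.t : K) hne)).mul_left

/-- The `TS`-module `𝕊 = C_c^∞(k^×)`. -/
def SRep (ψ : AddChar K ℂ) (hψlc : IsLocallyConstant (⇑ψ)) : Rep K ↥(SSx K) :=
  GRep.sub (repCx K ψ) (SSx_invariant ψ hψlc)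

/-- The `TS`-module `𝔼[χ]`, i.e. `C_c^∞(k)` with the `χ`-twisted action. -/
def ERep (ψ : AddChar K ℂ) (hψlc : IsLocallyConstant (⇑ψ)) (χ : Kˣ →* ℂˣ) : Rep K ↥(CcK K) :=
  GRep.sub (repCc K ψ χ) (CcK_invariant ψ hψlc χ)

/-- The `TS`-module `𝕊^s`, a direct sum of `s` copies of `𝕊`. -/
def SRepPow (ψ : AddChar K ℂ) (hψlc : IsLocallyConstant (⇑ψ)) (s : ℕ) :
    Rep K (Fin s → ↥(SSx K)) where
  toFun g := LinearMap.pi fun i => (SRep ψ hψlc g).comp (LinearMap.proj i)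
  map_one' := by
    apply LinearMap.ext; intro v; funext i
    simp
  map_mul' g h := by
    apply LinearMap.ext; intro v; funext i
    simp [map_mul]

/-- The submodule `E` of `C_b^∞(k^×)` consisting of functions which are `χ`-eigenvectors
modulo `𝕊`; the quotient `E/𝕊` is the `χ`-eigenspace of `C_b^∞(k^×)/𝕊`. -/
def quotEigen (ψ : AddChar K ℂ) (χ : Kˣ →* ℂˣ) : Submodule ℂ (Kˣ → ℂ) where
  carrier := {f | f ∈ Cb K ∧ ∀ u : Kˣ, repCx K ψ (Aff.xT u) f - (χ u : ℂ) • f ∈ SSx K}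
  zero_mem' := ⟨(Cb K).zero_mem, fun u => by simpa using (SSx K).zero_mem⟩
  add_mem' {a b} ha hb := by
    refine ⟨(Cb K).add_mem ha.1 hb.1, fun u => ?_⟩
    rw [map_add, smul_add, add_sub_add_comm]
    exact (SSx K).add_mem (ha.2 u) (hb.2 u)
  smul_mem' c f hf := by
    refine ⟨(Cb K).smul_mem c hf.1, fun u => ?_⟩
    rw [map_smul, smul_comm, ← smul_sub]
    exact (SSx K).smul_mem c (hf.2 u)

/-- Evaluation at `0 ∈ k`, realizing the quotient map `𝔼[χ] → ℂ_χ` with kernel `𝕊`. -/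
def ev0 : ↥(CcK K) →ₗ[ℂ] ℂ where
  toFun f := (f : K → ℂ) 0
  map_add' f g := rfl
  map_smul' c f := rfl

end Concrete

/-! ### The diagonal torus in GL(2). -/

section GL2

variable {K : Type*} [Field K]

/-- The diagonal element `diag(a, b)` of `GL(2, K)`. -/
def diagGL (a b : Kˣ) : Matrix.GeneralLinearGroup (Fin 2) K where
  val := Matrix.diagonal ![(a : K), (b : K)]
  inv := Matrix.diagonal ![((a : K))⁻¹, ((b : K))⁻¹]
  val_inv := by
    ext i j
    fin_cases i <;> fin_cases j <;>
      simp [Matrix.mul_apply, Fin.sum_univ_two, Matrix.diagonal, Matrix.one_apply,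
        a.ne_zero, b.ne_zero]
  inv_val := by
    ext i j
    fin_cases i <;> fin_cases j <;>
      simp [Matrix.mul_apply, Fin.sum_univ_two, Matrix.diagonal, Matrix.one_apply,
        a.ne_zero, b.ne_zero]

end GL2

/-!
Everything is read off from the twisted coinvariants `V_{S,ψ}`, an exact functor of the smooth
module `V`. On irreducible modules it has length one on `𝕊` (where it is evaluation at `1`) and
vanishes on the others, since a nonzero linear form on `V_{S,ψ}` embeds `V` in a space of functions
on `kˣ`; hence the length of `V_{S,ψ}` is the degree. Since `T` permutes the nontrivial characters
of `S` transitively, Fourier inversion on `S` shows that `V_{S,ψ} = 0` forces `S` to act trivially.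
If `V_{S,ψ}` has length one, an invariant subspace `U` therefore either has `U_{S,ψ} = 0`, and `S`
acts trivially on `U`, or has `(V/U)_{S,ψ} = 0`, and `U` contains the kernel `V(S)` of `V → V_S`.

Apply this to `ker φ ⊆ 𝔼[X]`. In the second case `φ` factors through the finite-dimensional `π₀`.
In the first case `ker φ` embeds in `π₀(𝔼[X])`, and a nonzero finite-dimensional `ker φ` would
contain a joint eigenvector of `T`, contradicting perfectness. For injective `φ`, apply it to the
image of `φ`: it contains `M(S)`, so that passing to coinvariants does not change the cokernel.
-/

open Filter Topology

section BallRepresentatives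

variable {A : Type*} [SeminormedAddCommGroup A]

/-- `F` is a system of representatives of the ball of radius `R` around `0`
modulo the ball of radius `ε`. -/
structure IsBallReps (F : Finset A) (R ε : ℝ) : Prop where
  norm_le : ∀ b ∈ F, ‖b‖ ≤ R
  exists_near : ∀ b : A, ‖b‖ ≤ R → ∃ f ∈ F, ‖b - f‖ ≤ ε
  eq_of_near : ∀ f ∈ F, ∀ f' ∈ F, ‖f - f'‖ ≤ ε → f = f'

variable {F : Finset A} {R ε : ℝ}

lemma IsBallReps.card_ne_zero (hF : IsBallReps F R ε) (hR : 0 ≤ R) : (F.card : ℂ) ≠ 0 := by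
  obtain ⟨f, hf, -⟩ := hF.exists_near 0 (by simpa using hR)
  exact Nat.cast_ne_zero.2 (Finset.card_ne_zero_of_mem hf)

variable [IsUltrametricDist A]

lemma exists_isBallReps [ProperSpace A] (R : ℝ) (hε : 0 < ε) :
    ∃ F : Finset A, IsBallReps F R ε := by
  let C := IsUltrametricDist.closedBall_openAddSubgroup A hε
  have mk_eq (x y : A) : (x : A ⧸ C.toAddSubgroup) = y ↔ ‖y - x‖ ≤ ε := by
    rw [QuotientAddGroup.eq, neg_add_eq_sub]
    exact mem_closedBall_zero_iff
  have : DiscreteTopology (A ⧸ C.toAddSubgroup) := QuotientAddGroup.discreteTopology C.isOpen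
  obtain ⟨F, hF, hbij⟩ := Set.SurjOn.exists_bijOn_subset
    (Set.surjOn_image (QuotientAddGroup.mk : A → A ⧸ C.toAddSubgroup) (Metric.closedBall 0 R))
  have hfin : F.Finite := hbij.finite_iff_finite.2
    ((isCompact_closedBall 0 R).image continuous_quotient_mk').finite_of_discrete
  refine ⟨hfin.toFinset, fun b hb => ?_, fun b hb => ?_, fun f hf f' hf' h => ?_⟩
  · exact mem_closedBall_zero_iff.1 (hF (hfin.mem_toFinset.1 hb))
  · obtain ⟨f, hf, hfb⟩ := hbij.surjOn ⟨b, mem_closedBall_zero_iff.2 hb, rfl⟩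
    exact ⟨f, hfin.mem_toFinset.2 hf, (mk_eq f b).1 hfb⟩
  · exact (hbij.injOn (hfin.mem_toFinset.1 hf') (hfin.mem_toFinset.1 hf) ((mk_eq f' f).2 h)).symm

lemma norm_add_le_of_le_of_le {x y : A} (hx : ‖x‖ ≤ R) (hy : ‖y‖ ≤ R) : ‖x + y‖ ≤ R :=
  (IsUltrametricDist.norm_add_le_max x y).trans (max_le hx hy)

lemma IsBallReps.sum_add_right {M : Type*} [AddCommMonoid M] (hF : IsBallReps F R ε)
    {g : A → M} (hg : ∀ x y, ‖x - y‖ ≤ ε → g x = g y) {b : A} (hb : ‖b‖ ≤ R) :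
    ∑ f ∈ F, g (f + b) = ∑ f ∈ F, g f := by
  choose! i hiF hi using fun f (hf : f ∈ F) =>
    hF.exists_near _ (norm_add_le_of_le_of_le (hF.norm_le f hf) hb)
  have hinj : Set.InjOn i F := fun f hf f' hf' hff' => by
    refine hF.eq_of_near f hf f' hf' ?_
    have h := norm_add_le_of_le_of_le (hi f hf) (by rw [norm_neg]; exact hi f' hf' :
      ‖-(f' + b - i f')‖ ≤ ε)
    rwa [hff', neg_sub, sub_add_sub_cancel, add_sub_add_right_eq_sub] at h
  refine Finset.sum_nbij i hiF hinj ?_ fun f hf => hg _ _ (hi f hf)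
  exact Finset.surjOn_of_injOn_of_card_le i hiF hinj le_rfl

lemma IsBallReps.sum_addChar_eq_zero (hF : IsBallReps F R ε) {θ : AddChar A ℂ}
    (hθ : ∀ x, ‖x‖ ≤ ε → θ x = 1) {b : A} (hb : ‖b‖ ≤ R) (hθb : θ b ≠ 1) :
    ∑ f ∈ F, θ f = 0 := by
  have hshift : (∑ f ∈ F, θ f) * θ b = ∑ f ∈ F, θ f := by
    rw [Finset.sum_mul, ← hF.sum_add_right (g := θ) (fun x y hxy => ?_) hb]
    · simp only [AddChar.map_add_eq_mul]
    · rw [← sub_add_cancel x y, AddChar.map_add_eq_mul, hθ _ hxy, one_mul]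
  exact (mul_right_eq_self₀.1 hshift).resolve_left hθb

end BallRepresentatives

section SmallBalls

variable {A : Type*} [SeminormedAddCommGroup A]

lemma eventually_forall_norm_le {p : A → Prop} (hp : ∀ᶠ x in 𝓝 0, p x) :
    ∀ᶠ ε in 𝓝[>] (0 : ℝ), ∀ x, ‖x‖ ≤ ε → p x := by
  obtain ⟨δ, hδ, hball⟩ := Metric.eventually_nhds_iff.1 hp
  filter_upwards [Ioo_mem_nhdsGT hδ] with ε hε x hx
  exact hball (by simpa using hx.trans_lt hε.2)

end SmallBalls

section AdditiveActions

variable {A V W : Type*} [AddCommMonoid A] [AddCommGroup V] [Module ℂ V]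
  [AddCommGroup W] [Module ℂ W]

/-- The kernel of the projection from `V` to the coinvariants of `A`. -/
def coinvKer (τ : AddChar A (Module.End ℂ V)) : Submodule ℂ V :=
  Submodule.span ℂ {w | ∃ b v, w = τ b v - v}

variable {τ : AddChar A (Module.End ℂ V)} {σ : AddChar A (Module.End ℂ W)}

lemma coinvKer_map_le {f : V →ₗ[ℂ] W} (hf : ∀ b v, f (τ b v) = σ b (f v)) :
    (coinvKer τ).map f ≤ coinvKer σ := by
  rw [Submodule.map_le_iff_le_comap, coinvKer, Submodule.span_le]
  rintro _ ⟨b, v, rfl⟩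
  exact Submodule.subset_span ⟨b, f v, by rw [map_sub, hf]⟩

lemma coinvKer_map_of_surjective {f : V →ₗ[ℂ] W} (hf : ∀ b v, f (τ b v) = σ b (f v))
    (hsurj : Function.Surjective f) : (coinvKer τ).map f = coinvKer σ := by
  refine le_antisymm (coinvKer_map_le hf) (Submodule.span_le.2 ?_)
  rintro _ ⟨b, w, rfl⟩
  obtain ⟨v, rfl⟩ := hsurj w
  exact ⟨τ b v - v, Submodule.subset_span ⟨b, v, rfl⟩, by rw [map_sub, hf]⟩

/-- The sum of the operators `τ b` over a finite set `F`: up to normalization, the averaging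
operator when `F` represents a ball. -/
def actionSum (τ : AddChar A (Module.End ℂ V)) (F : Finset A) : Module.End ℂ V :=
  ∑ b ∈ F, τ b

lemma actionSum_apply (F : Finset A) (v : V) : actionSum τ F v = ∑ b ∈ F, τ b v :=
  LinearMap.sum_apply ..

lemma actionSum_of_fixed {F : Finset A} {v : V} (hv : ∀ b ∈ F, τ b v = v) :
    actionSum τ F v = (F.card : ℂ) • v := by
  rw [actionSum_apply, Finset.sum_congr rfl hv, Finset.sum_const, Nat.cast_smul_eq_nsmul]

lemma actionSum_comm (F : Finset A) (b : A) (v : V) :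
    actionSum τ F (τ b v) = τ b (actionSum τ F v) := by
  rw [actionSum_apply, actionSum_apply, map_sum]
  refine Finset.sum_congr rfl fun a _ => ?_
  rw [← Module.End.mul_apply, ← Module.End.mul_apply, ← AddChar.map_add_eq_mul,
    ← AddChar.map_add_eq_mul, add_comm]

end AdditiveActions

section SmoothActions

variable {A V W : Type*} [SeminormedAddCommGroup A] [AddCommGroup V] [Module ℂ V]
  [AddCommGroup W] [Module ℂ W]

/-- An action of the additive group `A` on `V` is smooth if stabilizers of vectors are
neighbourhoods of `0`. -/
def SmoothAction (τ : AddChar A (Module.End ℂ V)) : Prop :=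
  ∀ v, ∀ᶠ b in 𝓝 0, τ b v = v

/-- The kernel of the projection from `V` to the coinvariants of the ball of radius `R`. -/
def coinvKerBall (τ : AddChar A (Module.End ℂ V)) (R : ℝ) : Submodule ℂ V :=
  Submodule.span ℂ {w | ∃ b v, ‖b‖ ≤ R ∧ w = τ b v - v}

variable {τ : AddChar A (Module.End ℂ V)} {σ : AddChar A (Module.End ℂ W)}

lemma sub_mem_coinvKerBall {R : ℝ} {b : A} (hb : ‖b‖ ≤ R) (v : V) :
    τ b v - v ∈ coinvKerBall τ R :=
  Submodule.subset_span ⟨b, v, hb, rfl⟩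

lemma coinvKerBall_mono {R R' : ℝ} (h : R ≤ R') : coinvKerBall τ R ≤ coinvKerBall τ R' :=
  Submodule.span_mono fun _ ⟨b, v, hb, hw⟩ => ⟨b, v, hb.trans h, hw⟩

lemma coinvKerBall_le (R : ℝ) : coinvKerBall τ R ≤ coinvKer τ :=
  Submodule.span_mono fun _ ⟨b, v, _, hw⟩ => ⟨b, v, hw⟩

lemma coinvKer_eq_iSup : coinvKer τ = ⨆ R, coinvKerBall τ R := by
  refine le_antisymm (Submodule.span_le.2 ?_) (iSup_le coinvKerBall_le)
  rintro _ ⟨b, v, rfl⟩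
  exact Submodule.mem_iSup_of_mem ‖b‖ (sub_mem_coinvKerBall le_rfl v)

lemma eventually_mem_coinvKerBall {v : V} (hv : v ∈ coinvKer τ) :
    ∀ᶠ R in atTop, v ∈ coinvKerBall τ R := by
  rw [coinvKer_eq_iSup, Submodule.mem_iSup_of_directed _
    (Monotone.directed_le fun _ _ => coinvKerBall_mono)] at hv
  obtain ⟨R, hR⟩ := hv
  filter_upwards [eventually_ge_atTop R] with R' hR' using coinvKerBall_mono hR' hR

lemma SmoothAction.of_injective (hσ : SmoothAction σ) {f : V →ₗ[ℂ] W}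
    (hf : ∀ b v, f (τ b v) = σ b (f v)) (hinj : Function.Injective f) : SmoothAction τ := by
  intro v
  filter_upwards [hσ (f v)] with b hb using hinj ((hf b v).trans hb)

lemma SmoothAction.of_surjective (hτ : SmoothAction τ) {f : V →ₗ[ℂ] W}
    (hf : ∀ b v, f (τ b v) = σ b (f v)) (hsurj : Function.Surjective f) : SmoothAction σ := by
  intro w
  obtain ⟨v, rfl⟩ := hsurj w
  filter_upwards [hτ v] with b hb
  rw [← hf, hb]

variable {F : Finset A} {R ε : ℝ}

lemma actionSum_sub_mem (hF : IsBallReps F R ε) (v : V) :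
    actionSum τ F v - (F.card : ℂ) • v ∈ coinvKerBall τ R := by
  have : actionSum τ F v - (F.card : ℂ) • v = ∑ b ∈ F, (τ b v - v) := by
    rw [Finset.sum_sub_distrib, Finset.sum_const, actionSum_apply, Nat.cast_smul_eq_nsmul]
  rw [this]
  exact Submodule.sum_mem _ fun b hb => sub_mem_coinvKerBall (hF.norm_le b hb) v

variable [IsUltrametricDist A]

lemma apply_actionSum_of_norm_le (hF : IsBallReps F R ε) {v : V}
    (hv : ∀ b, ‖b‖ ≤ ε → τ b v = v) {b : A} (hb : ‖b‖ ≤ R) :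
    τ b (actionSum τ F v) = actionSum τ F v := by
  rw [← actionSum_comm, actionSum_apply, actionSum_apply,
    ← hF.sum_add_right (g := fun x => τ x v) (fun x y hxy => ?_) hb]
  · simp only [AddChar.map_add_eq_mul, Module.End.mul_apply]
  · rw [← add_sub_cancel y x, AddChar.map_add_eq_mul, Module.End.mul_apply, hv _ hxy]

lemma eventually_actionSum_eq_zero (hτ : SmoothAction τ) {v : V} (hv : v ∈ coinvKerBall τ R) :
    ∀ᶠ ε in 𝓝[>] (0 : ℝ), ∀ F : Finset A, IsBallReps F R ε → actionSum τ F v = 0 := by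
  induction hv using Submodule.span_induction with
  | mem w hw =>
    obtain ⟨b, v, hb, rfl⟩ := hw
    filter_upwards [eventually_forall_norm_le (hτ v)] with ε hε F hF
    rw [map_sub, actionSum_comm, apply_actionSum_of_norm_le hF hε hb, sub_self]
  | zero => exact Eventually.of_forall fun _ _ _ => map_zero _
  | add x y _ _ hx hy =>
    filter_upwards [hx, hy] with ε hx hy F hF
    rw [map_add, hx F hF, hy F hF, add_zero]
  | smul c x _ hx =>
    filter_upwards [hx] with ε hx F hF
    rw [map_smul, hx F hF, smul_zero]

variable [ProperSpace A]

lemma mem_coinvKerBall_iff (hτ : SmoothAction τ) (hF : IsBallReps F R ε) (hR : 0 ≤ R) {v : V}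
    (hv : ∀ b, ‖b‖ ≤ ε → τ b v = v) : v ∈ coinvKerBall τ R ↔ actionSum τ F v = 0 := by
  have hmem : actionSum τ F v ∈ coinvKerBall τ R ↔ v ∈ coinvKerBall τ R := by
    rw [← Submodule.smul_mem_iff (x := v) _ (hF.card_ne_zero hR),
      ← Submodule.sub_mem_iff_left _ (actionSum_sub_mem hF v), sub_sub_self]
  rw [← hmem]
  refine ⟨fun hmem => ?_, fun h => h ▸ zero_mem _⟩
  obtain ⟨δ, hδ, hδpos⟩ :=
    ((eventually_actionSum_eq_zero hτ hmem).and self_mem_nhdsWithin).exists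
  obtain ⟨F', hF'⟩ := exists_isBallReps (A := A) R hδpos
  have hfixed := actionSum_of_fixed fun b hb =>
    apply_actionSum_of_norm_le hF hv (hF'.norm_le b hb)
  rw [hδ F' hF', eq_comm, smul_eq_zero] at hfixed
  exact hfixed.resolve_left (hF'.card_ne_zero hR)

lemma coinvKer_comap_of_injective (hσ : SmoothAction σ) {f : V →ₗ[ℂ] W}
    (hf : ∀ b v, f (τ b v) = σ b (f v)) (hinj : Function.Injective f) :
    (coinvKer σ).comap f = coinvKer τ := by
  refine le_antisymm (fun v hv => ?_) (Submodule.map_le_iff_le_comap.1 (coinvKer_map_le hf))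
  obtain ⟨R, hvR, hR⟩ := ((eventually_mem_coinvKerBall hv).and (eventually_ge_atTop 0)).exists
  obtain ⟨ε, hε, hεpos⟩ :=
    ((eventually_forall_norm_le (hσ (f v))).and self_mem_nhdsWithin).exists
  obtain ⟨F, hF⟩ := exists_isBallReps (A := A) R hεpos
  have hsum : f (actionSum τ F v) = 0 := by
    rw [← (mem_coinvKerBall_iff hσ hF hR hε).1 hvR, actionSum_apply, actionSum_apply, map_sum]
    simp only [hf]
  have hτ : ∀ b, ‖b‖ ≤ ε → τ b v = v := fun b hb => hinj ((hf b v).trans (hε b hb))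
  refine coinvKerBall_le R ((mem_coinvKerBall_iff (hσ.of_injective hf hinj) hF hR hτ).2 (hinj ?_))
  rw [hsum, map_zero]

end SmoothActions

section SmoothRepresentations

open Aff

variable {K : Type*} [Field K]

namespace Aff

lemma sS_add (a b : K) : sS (a + b) = sS a * sS b := by ext <;> simp

variable [TopologicalSpace K]

lemma continuous_toProd : Continuous fun g : Aff K => (g.t, g.s) := continuous_induced_dom

lemma continuous_xT : Continuous (xT : Kˣ → Aff K) :=
  continuous_induced_rng.2 (continuous_id.prodMk continuous_const)

lemma continuous_sS : Continuous (sS : K → Aff K) :=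
  continuous_induced_rng.2 (continuous_const.prodMk continuous_id)

instance [IsTopologicalRing K] : ContinuousMul (Aff K) where
  continuous_mul := by
    have ht : Continuous fun g : Aff K => g.t := continuous_fst.comp continuous_toProd
    have hs : Continuous fun g : Aff K => g.s := continuous_snd.comp continuous_toProd
    refine continuous_induced_rng.2 (.prodMk ?_ ?_)
    · exact (ht.comp continuous_fst).mul (ht.comp continuous_snd)
    · exact (hs.comp continuous_fst).add
        ((Units.continuous_val.comp (ht.comp continuous_fst)).mul (hs.comp continuous_snd))

end Aff

variable [TopologicalSpace K] {V W : Type*} [AddCommGroup V] [Module ℂ V] [AddCommGroup W]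
  [Module ℂ W] {ρ : Rep K V} {σ : Rep K W}

lemma IsSmoothRep.eventually_apply_eq (hρ : IsSmoothRep ρ) (v : V) :
    ∀ᶠ g in 𝓝 1, ρ g v = v :=
  (hρ v).mem_nhds (by simp)

lemma isSmoothRep_of_eventually [IsTopologicalRing K] (h : ∀ v, ∀ᶠ g in 𝓝 1, ρ g v = v) :
    IsSmoothRep ρ := by
  intro v
  let stab : Subgroup (Aff K) :=
    { carrier := {g | ρ g v = v}
      one_mem' := by simp
      mul_mem' := fun {g h} (hg : ρ g v = v) (hh : ρ h v = v) => by
        rw [Set.mem_ofPred_eq, map_mul, Module.End.mul_apply, hh, hg]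
      inv_mem' := fun {g} (hg : ρ g v = v) => by
        rw [Set.mem_ofPred_eq]
        nth_rw 1 [← hg]
        rw [ρ.inv_self_apply] }
  exact stab.isOpen_of_mem_nhds (h v)

lemma IsSmoothRep.of_injective (hσ : IsSmoothRep σ) {f : V →ₗ[ℂ] W}
    (hf : GRep.Equivariant ρ σ f) (hinj : Function.Injective f) : IsSmoothRep ρ := by
  intro v
  convert hσ (f v) using 3
  rw [← hf, hinj.eq_iff]

lemma IsSmoothRep.of_surjective [IsTopologicalRing K] (hρ : IsSmoothRep ρ) {f : V →ₗ[ℂ] W}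
    (hf : GRep.Equivariant ρ σ f) (hsurj : Function.Surjective f) : IsSmoothRep σ := by
  refine isSmoothRep_of_eventually fun w => ?_
  obtain ⟨v, rfl⟩ := hsurj w
  filter_upwards [hρ.eventually_apply_eq v] with g hg
  rw [← hf, hg]

lemma GRep.sub_equivariant {G : Type*} [Monoid G] {ρ : Representation ℂ G V}
    {U : Submodule ℂ V} (hU : GRep.Invariant ρ U) : GRep.Equivariant (GRep.sub ρ hU) ρ U.subtype :=
  fun _ _ => rfl

lemma IsSmoothRep.sub (hρ : IsSmoothRep ρ) {U : Submodule ℂ V} (hU : GRep.Invariant ρ U) :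
    IsSmoothRep (GRep.sub ρ hU) :=
  hρ.of_injective (GRep.sub_equivariant hU) U.subtype_injective

lemma IsSmoothRep.quot [IsTopologicalRing K] (hρ : IsSmoothRep ρ) {U : Submodule ℂ V}
    (hU : GRep.Invariant ρ U) : IsSmoothRep (GRep.quot ρ U hU) :=
  hρ.of_surjective (GRep.mkQ_equivariant ρ U hU) U.mkQ_surjective

lemma IsSmoothRep.eventually_xT (hρ : IsSmoothRep ρ) (v : V) :
    ∀ᶠ u : Kˣ in 𝓝 1, ρ (xT u) v = v :=
  continuous_xT.continuousAt.eventually (hρ.eventually_apply_eq v)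

end SmoothRepresentations

section Twist

open Aff

variable {K : Type*} [Field K] {V W : Type*} [AddCommGroup V] [Module ℂ V] [AddCommGroup W]
  [Module ℂ W] {ρ : Rep K V} {σ : Rep K W} {θ : AddChar K ℂ}

/-- The action of `S ≅ K` on `V` twisted by `θ⁻¹`, so that its coinvariants are the `θ`-twisted
coinvariants `V_{S,θ}`. -/
def sTwist (ρ : Rep K V) (θ : AddChar K ℂ) : AddChar K (Module.End ℂ V) where
  toFun b := θ (-b) • ρ (sS b)
  map_zero_eq_one' := by
    rw [neg_zero, θ.map_zero_eq_one, one_smul]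
    exact ρ.map_one
  map_add_eq_mul' a b := by
    rw [sS_add, map_mul, neg_add, θ.map_add_eq_mul, smul_mul_smul_comm]

lemma sTwist_apply (b : K) (v : V) : sTwist ρ θ b v = θ (-b) • ρ (sS b) v := rfl

lemma sTwist_one_apply (b : K) (v : V) : sTwist ρ 1 b v = ρ (sS b) v := by
  rw [sTwist_apply, AddChar.one_apply, one_smul]

lemma sTwistKer_eq_coinvKer : sTwistKer ρ θ = coinvKer (sTwist ρ θ) := by
  have smul_sub_eq (b : K) (v : V) :
      ρ (sS b) v - θ b • v = θ b • (sTwist ρ θ b v - v) := by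
    rw [sTwist_apply, smul_sub, smul_smul, ← θ.map_add_eq_mul, add_neg_cancel,
      θ.map_zero_eq_one, one_smul]
  refine le_antisymm (Submodule.span_le.2 ?_) (Submodule.span_le.2 ?_)
  · rintro _ ⟨b, v, rfl⟩
    rw [smul_sub_eq]
    exact Submodule.smul_mem _ _ (Submodule.subset_span ⟨b, v, rfl⟩)
  · rintro _ ⟨b, v, rfl⟩
    have h : ρ (sS b) v - θ b • v ∈ sTwistKer ρ θ := Submodule.subset_span ⟨b, v, rfl⟩
    rwa [smul_sub_eq, Submodule.smul_mem_iff _ (AddChar.val_isUnit θ b).ne_zero] at h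

lemma sCoinvKer_eq_coinvKer : sCoinvKer ρ = coinvKer (sTwist ρ 1) := by
  simp only [sCoinvKer, coinvKer, sTwist_one_apply]

lemma sTwist_equivariant {f : V →ₗ[ℂ] W} (hf : GRep.Equivariant ρ σ f) (b : K) (v : V) :
    f (sTwist ρ θ b v) = sTwist σ θ b (f v) := by
  rw [sTwist_apply, sTwist_apply, map_smul, hf]

lemma sTwistKer_map_of_surjective {f : V →ₗ[ℂ] W} (hf : GRep.Equivariant ρ σ f)
    (hsurj : Function.Surjective f) : (sTwistKer ρ θ).map f = sTwistKer σ θ := by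
  rw [sTwistKer_eq_coinvKer, sTwistKer_eq_coinvKer]
  exact coinvKer_map_of_surjective (sTwist_equivariant hf) hsurj

end Twist

section SmoothTwist

open Aff

variable {K : Type*} [NontriviallyNormedField K] {V W : Type*} [AddCommGroup V] [Module ℂ V]
  [AddCommGroup W] [Module ℂ W] {ρ : Rep K V} {σ : Rep K W} {θ : AddChar K ℂ}

/-- Smoothness of the restriction of a representation to `S`. -/
def SSmooth (ρ : Rep K V) : Prop :=
  SmoothAction (sTwist ρ 1)

lemma IsSmoothRep.sSmooth (hρ : IsSmoothRep ρ) : SSmooth ρ := by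
  intro v
  simp only [sTwist_one_apply]
  exact continuous_sS.continuousAt.eventually (hρ.eventually_apply_eq v)

lemma SSmooth.sub (hρ : SSmooth ρ) {U : Submodule ℂ V} (hU : GRep.Invariant ρ U) :
    SSmooth (GRep.sub ρ hU) :=
  hρ.of_injective (sTwist_equivariant (GRep.sub_equivariant hU)) U.subtype_injective

lemma SSmooth.quot (hρ : SSmooth ρ) {U : Submodule ℂ V} (hU : GRep.Invariant ρ U) :
    SSmooth (GRep.quot ρ U hU) :=
  hρ.of_surjective (sTwist_equivariant (GRep.mkQ_equivariant ρ U hU)) U.mkQ_surjective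

lemma eventually_addChar_eq_one (hθ : IsLocallyConstant θ) : ∀ᶠ b in 𝓝 0, θ b = 1 := by
  filter_upwards [hθ.eventually_eq 0] with b hb using hb.trans θ.map_zero_eq_one

lemma SSmooth.smoothAction_sTwist (hρ : SSmooth ρ) (hθ : IsLocallyConstant θ) :
    SmoothAction (sTwist ρ θ) := by
  intro v
  have hneg : Tendsto (fun b : K => -b) (𝓝 0) (𝓝 0) := by
    simpa using (continuous_neg (G := K)).tendsto 0
  filter_upwards [hneg.eventually (eventually_addChar_eq_one hθ), hρ v] with b hθb hb
  rw [sTwist_one_apply] at hb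
  rw [sTwist_apply, hθb, one_smul, hb]

variable [IsUltrametricDist K] [ProperSpace K]

lemma sTwistKer_comap_of_injective (hσ : SSmooth σ) (hθ : IsLocallyConstant θ)
    {f : V →ₗ[ℂ] W} (hf : GRep.Equivariant ρ σ f) (hinj : Function.Injective f) :
    (sTwistKer σ θ).comap f = sTwistKer ρ θ := by
  rw [sTwistKer_eq_coinvKer, sTwistKer_eq_coinvKer]
  exact coinvKer_comap_of_injective (hσ.smoothAction_sTwist hθ) (sTwist_equivariant hf) hinj

lemma sCoinvKer_comap_of_injective (hσ : SSmooth σ)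
    {f : V →ₗ[ℂ] W} (hf : GRep.Equivariant ρ σ f) (hinj : Function.Injective f) :
    (sCoinvKer σ).comap f = sCoinvKer ρ := by
  rw [sCoinvKer_eq_coinvKer, sCoinvKer_eq_coinvKer]
  exact coinvKer_comap_of_injective hσ (sTwist_equivariant hf) hinj

end SmoothTwist

section TwistTranslation

open Aff

variable {K : Type*} [Field K] {V : Type*} [AddCommGroup V] [Module ℂ V] {ρ : Rep K V}
  {ψ : AddChar K ℂ}

lemma apply_xT_mem_sTwistKer (u : Kˣ) {v : V} (hv : v ∈ sTwistKer ρ (ψ.mulShift u)) :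
    ρ (xT u) v ∈ sTwistKer ρ ψ := by
  suffices sTwistKer ρ (ψ.mulShift u) ≤ (sTwistKer ρ ψ).comap (ρ (xT u)) from this hv
  refine Submodule.span_le.2 ?_
  rintro _ ⟨b, v, rfl⟩
  refine Submodule.subset_span ⟨u * b, ρ (xT u) v, ?_⟩
  rw [map_sub, map_smul, AddChar.mulShift_apply, ← Module.End.mul_apply, ← map_mul, mul_sS, map_mul,
    Module.End.mul_apply, xT_t]

lemma apply_xT_mem_sTwistKer_iff (u : Kˣ) {v : V} :
    ρ (xT u) v ∈ sTwistKer ρ ψ ↔ v ∈ sTwistKer ρ (ψ.mulShift u) := by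
  refine ⟨fun hv => ?_, apply_xT_mem_sTwistKer u⟩
  have hinv : (xT u : Aff K)⁻¹ = xT u⁻¹ := (map_inv xTHom u).symm
  rw [← ρ.inv_self_apply (xT u) v, hinv]
  refine apply_xT_mem_sTwistKer u⁻¹ ?_
  rwa [AddChar.mulShift_mulShift, Units.mul_inv, AddChar.mulShift_one]

end TwistTranslation

section Fourier

open Aff

variable {K : Type*} [NontriviallyNormedField K] {V : Type*} [AddCommGroup V] [Module ℂ V]
  {ρ : Rep K V} {ψ : AddChar K ℂ}

lemma eventually_forall_addChar_mul_eq_one (hψ : IsLocallyConstant ψ) (R : ℝ) :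
    ∀ᶠ x in 𝓝 (0 : K), ∀ y, ‖y‖ ≤ R → ψ (x * y) = 1 := by
  obtain ⟨c, hc, hcpos⟩ := ((eventually_forall_norm_le (eventually_addChar_eq_one hψ)).and
    self_mem_nhdsWithin).exists
  have hR : 0 < |R| + 1 := by positivity
  filter_upwards [Metric.closedBall_mem_nhds (0 : K) (div_pos hcpos hR)] with x hx y hy
  refine hc _ ?_
  calc ‖x * y‖ = ‖x‖ * ‖y‖ := norm_mul x y
    _ ≤ c / (|R| + 1) * (|R| + 1) := by
      refine mul_le_mul (mem_closedBall_zero_iff.1 hx) ?_ (norm_nonneg y) (div_pos hcpos hR).le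
      linarith [le_abs_self R]
    _ = c := div_mul_cancel₀ c hR.ne'

lemma isLocallyConstant_mulShift (hψ : IsLocallyConstant ψ) (x : K) :
    IsLocallyConstant (ψ.mulShift x) :=
  hψ.comp_continuous (continuous_const_mul x)

lemma norm_le_of_forall_addChar_mul_eq_one {b : K} (hb : ψ b ≠ 1) {ε : ℝ} (hε : 0 < ε) {y : K}
    (hy : ∀ x, ‖x‖ ≤ ‖b‖ / ε → ψ (x * y) = 1) : ‖y‖ ≤ ε := by
  by_contra! hlt
  have hy0 : y ≠ 0 := norm_pos_iff.1 (hε.trans hlt)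
  refine hb ?_
  rw [← div_mul_cancel₀ b hy0]
  exact hy _ (by rw [norm_div]; gcongr)

lemma sTwist_mulShift_apply (x b : K) (v : V) :
    sTwist ρ (ψ.mulShift x) b v = ψ (-x * b) • ρ (sS b) v := by
  rw [sTwist_apply, AddChar.mulShift_apply, mul_neg, neg_mul]

lemma isOpen_setOf_mem_coinvKerBall_mulShift (hψ : IsLocallyConstant ψ) (v : V) (R : ℝ) :
    IsOpen {x | v ∈ coinvKerBall (sTwist ρ (ψ.mulShift x)) R} := by
  refine isOpen_iff_mem_nhds.2 fun x hx => ?_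
  have hsub : Tendsto (fun y => x - y) (𝓝 x) (𝓝 0) := by
    simpa using (continuous_sub_left x).tendsto x
  filter_upwards [hsub.eventually (eventually_forall_addChar_mul_eq_one hψ R)] with y hy
  suffices h : coinvKerBall (sTwist ρ (ψ.mulShift x)) R ≤
      coinvKerBall (sTwist ρ (ψ.mulShift y)) R from h hx
  refine Submodule.span_mono ?_
  rintro _ ⟨b, v, hb, rfl⟩
  refine ⟨b, v, hb, ?_⟩
  rw [sTwist_mulShift_apply, sTwist_mulShift_apply, ← sub_add_cancel (-y) (-x), add_mul,
    AddChar.map_add_eq_mul, neg_sub_neg, hy b hb, one_mul]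

lemma exists_forall_mem_coinvKerBall (hψ : IsLocallyConstant ψ) {C : Set K} (hC : IsCompact C)
    {v : V} (hv : ∀ x ∈ C, v ∈ sTwistKer ρ (ψ.mulShift x)) (R₀ : ℝ) :
    ∃ R ≥ R₀, ∀ x ∈ C, v ∈ coinvKerBall (sTwist ρ (ψ.mulShift x)) R := by
  obtain ⟨R, hR⟩ := hC.elim_directed_cover
    (fun R => {x | v ∈ coinvKerBall (sTwist ρ (ψ.mulShift x)) R})
    (isOpen_setOf_mem_coinvKerBall_mulShift hψ v)
    (fun x hx => by
      rw [Set.mem_iUnion]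
      exact (eventually_mem_coinvKerBall (sTwistKer_eq_coinvKer (ρ := ρ) ▸ hv x hx)).exists)
    (Monotone.directed_le fun _ _ h _ => fun hx => coinvKerBall_mono h hx)
  exact ⟨max R₀ R, le_max_left _ _, fun x hx => coinvKerBall_mono (le_max_right _ _) (hR hx)⟩

variable [IsUltrametricDist K]

lemma sum_addChar_neg_mul_eq_ite {Λ : Finset K} {L η : ℝ} (hΛ : IsBallReps Λ L η) {y : K}
    (hy : ∀ x, ‖x‖ ≤ η → ψ (x * y) = 1) :
    ∑ x ∈ Λ, ψ (-x * y) = if ∀ x, ‖x‖ ≤ L → ψ (x * y) = 1 then (Λ.card : ℂ) else 0 := by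
  split_ifs with htriv
  · rw [Finset.sum_congr rfl fun x hx => htriv (-x) (by simpa using hΛ.norm_le x hx),
      Finset.sum_const, nsmul_one]
  · push Not at htriv
    obtain ⟨x, hx, hxy⟩ := htriv
    have hshift (z : K) : ψ.mulShift (-y) z = ψ (-z * y) := by
      rw [AddChar.mulShift_apply, neg_mul_comm, mul_comm]
    simp only [← hshift]
    refine hΛ.sum_addChar_eq_zero (b := -x) (fun z hz => ?_) (by simpa using hx) ?_
    · rw [hshift]
      exact hy _ (by simpa using hz)
    · rwa [hshift, neg_neg]

variable [ProperSpace K]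

/-- The Fourier coefficients `∑ y, ψ (-x y) s_y v` of `y ↦ s_y v` on a large ball vanish,
and summing them over `x` recovers a multiple of `v`. -/
lemma eq_zero_of_forall_mem_coinvKerBall (hρ : SSmooth ρ) (hψ : IsLocallyConstant ψ) {L R : ℝ}
    (hL : 0 ≤ L) (hR : 0 ≤ R) {v : V}
    (hv : ∀ x, ‖x‖ ≤ L → v ∈ coinvKerBall (sTwist ρ (ψ.mulShift x)) R)
    (hfix : ∀ y, (∀ x, ‖x‖ ≤ L → ψ (x * y) = 1) → ρ (sS y) v = v) : v = 0 := by
  obtain ⟨η, hη, hηpos⟩ := ((eventually_forall_norm_le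
    (eventually_forall_addChar_mul_eq_one hψ R)).and self_mem_nhdsWithin).exists
  obtain ⟨ε, hε, hεpos⟩ := ((eventually_forall_norm_le
    (eventually_forall_addChar_mul_eq_one hψ L)).and self_mem_nhdsWithin).exists
  obtain ⟨Λ, hΛ⟩ := exists_isBallReps (A := K) L hηpos
  obtain ⟨F, hF⟩ := exists_isBallReps (A := K) R hεpos
  let P : K → Prop := fun y => ∀ x, ‖x‖ ≤ L → ψ (x * y) = 1
  have hP (y : K) (hy : ‖y‖ ≤ ε) : P y := fun x hx => mul_comm y x ▸ hε y hy x hx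
  have hzero : ∀ x ∈ Λ, ∑ y ∈ F, ψ (-x * y) • ρ (sS y) v = 0 := fun x hx => by
    have hfixed (y : K) (hy : ‖y‖ ≤ ε) : sTwist ρ (ψ.mulShift x) y v = v := by
      rw [sTwist_mulShift_apply, hP y hy (-x) (by simpa using hΛ.norm_le x hx), one_smul,
        hfix y (hP y hy)]
    have hsum := (mem_coinvKerBall_iff
      (hρ.smoothAction_sTwist (isLocallyConstant_mulShift hψ x)) hF hR hfixed).1
      (hv x (hΛ.norm_le x hx))
    simpa only [actionSum_apply, sTwist_mulShift_apply] using hsum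
  have hinner : ∀ y ∈ F, ∑ x ∈ Λ, ψ (-x * y) • ρ (sS y) v =
      if P y then (Λ.card : ℂ) • v else 0 := fun y hy => by
    rw [← Finset.sum_smul,
      sum_addChar_neg_mul_eq_ite hΛ fun x hx => hη x hx y (hF.norm_le y hy), ite_smul, zero_smul]
    exact if_ctx_congr Iff.rfl (fun hPy => by rw [hfix y hPy]) fun _ => rfl
  have hcount : ((F.filter P).card : ℂ) • (Λ.card : ℂ) • v = 0 := by
    calc ((F.filter P).card : ℂ) • (Λ.card : ℂ) • v
        = ∑ y ∈ F, ∑ x ∈ Λ, ψ (-x * y) • ρ (sS y) v := by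
          rw [Finset.sum_congr rfl hinner, ← Finset.sum_filter, Finset.sum_const,
            Nat.cast_smul_eq_nsmul]
      _ = 0 := by rw [Finset.sum_comm, Finset.sum_eq_zero hzero]
  obtain ⟨f, hfF, hf⟩ := hF.exists_near 0 (by simpa using hR)
  have hcard : ((F.filter P).card : ℂ) ≠ 0 := Nat.cast_ne_zero.2 <| Finset.card_ne_zero_of_mem <|
    Finset.mem_filter.2 ⟨hfF, hP f (by simpa using hf)⟩
  rwa [smul_eq_zero_iff_right hcard, smul_eq_zero_iff_right (hΛ.card_ne_zero hL)] at hcount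

lemma sS_apply_eq_self_of_sTwistKer_eq_top (hρ : SSmooth ρ) (hψ : IsLocallyConstant ψ)
    (hψne : ψ ≠ 1) (htop : sTwistKer ρ ψ = ⊤) (b : K) (v : V) : ρ (sS b) v = v := by
  obtain ⟨b₀, hb₀⟩ := AddChar.ne_one_iff.1 hψne
  obtain ⟨ε, hε, hεpos⟩ := ((eventually_forall_norm_le (hρ (ρ (sS b) v - v))).and
    self_mem_nhdsWithin).exists
  have hεpos : 0 < ε := hεpos
  have hC : IsCompact (Metric.closedBall (0 : K) (‖b₀‖ / ε) ∩ {x | ψ (x * b) = 1}ᶜ) :=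
    (isCompact_closedBall _ _).inter_right
      ((hψ.comp_continuous (continuous_mul_const b)).isOpen_fiber 1).isClosed_compl
  have hmem : ∀ x ∈ Metric.closedBall (0 : K) (‖b₀‖ / ε) ∩ {x | ψ (x * b) = 1}ᶜ,
      ρ (sS b) v - v ∈ sTwistKer ρ (ψ.mulShift x) := by
    rintro x ⟨-, hx⟩
    have hx0 : x ≠ 0 := by
      rintro rfl
      simp at hx
    rw [← Units.val_mk0 hx0, ← apply_xT_mem_sTwistKer_iff, htop]
    trivial
  obtain ⟨R, hbR, hR⟩ := exists_forall_mem_coinvKerBall hψ hC hmem ‖b‖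
  refine sub_eq_zero.1 (eq_zero_of_forall_mem_coinvKerBall hρ hψ (L := ‖b₀‖ / ε)
    (by positivity) ((norm_nonneg b).trans hbR) (fun x hx => ?_) fun y hy => ?_)
  · by_cases hxb : ψ (x * b) = 1
    · have htwist : sTwist ρ (ψ.mulShift x) b v = ρ (sS b) v := by
        rw [sTwist_mulShift_apply, neg_mul, AddChar.map_neg_eq_inv, hxb, inv_one, one_smul]
      exact htwist ▸ sub_mem_coinvKerBall hbR v
    · exact hR x ⟨mem_closedBall_zero_iff.2 hx, hxb⟩
  · rw [← sTwist_one_apply]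
    exact hε y (norm_le_of_forall_addChar_mul_eq_one hb₀ hεpos hy)

end Fourier

section Dichotomy

open Aff

variable {K : Type*} [NontriviallyNormedField K] [IsUltrametricDist K] [ProperSpace K]
  {V : Type*} [AddCommGroup V] [Module ℂ V] {ρ : Rep K V} {ψ : AddChar K ℂ}

lemma sCoinvKer_le_of_sup_sTwistKer_eq_top (hρ : SSmooth ρ) (hψ : IsLocallyConstant ψ)
    (hψne : ψ ≠ 1) {U : Submodule ℂ V} (hU : GRep.Invariant ρ U) (htop : U ⊔ sTwistKer ρ ψ = ⊤) :
    sCoinvKer ρ ≤ U := by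
  have hquot : sTwistKer (GRep.quot ρ U hU) ψ = ⊤ := by
    rw [← sTwistKer_map_of_surjective (GRep.mkQ_equivariant ρ U hU) U.mkQ_surjective,
      Submodule.map_mkQ_eq_top, htop]
  refine Submodule.span_le.2 ?_
  rintro _ ⟨b, v, rfl⟩
  refine (Submodule.Quotient.eq U).1 ?_
  exact sS_apply_eq_self_of_sTwistKer_eq_top (hρ.quot hU) hψ hψne hquot b (U.mkQ v)

lemma le_sTwistKer_or_sCoinvKer_le (hρ : SSmooth ρ) (hψ : IsLocallyConstant ψ) (hψne : ψ ≠ 1)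
    (hcoatom : IsCoatom (sTwistKer ρ ψ)) {U : Submodule ℂ V} (hU : GRep.Invariant ρ U) :
    U ≤ sTwistKer ρ ψ ∨ sCoinvKer ρ ≤ U := by
  refine or_iff_not_imp_left.2 fun h => sCoinvKer_le_of_sup_sTwistKer_eq_top hρ hψ hψne hU ?_
  exact hcoatom.2 _ (right_lt_sup.2 h)

end Dichotomy

section UnitsTopology

variable {K : Type*} [NontriviallyNormedField K]

lemma isCompact_units_annulus [ProperSpace K] {δ : ℝ} (hδ : 0 < δ) (R : ℝ) :
    IsCompact {x : Kˣ | δ ≤ ‖(x : K)‖ ∧ ‖(x : K)‖ ≤ R} := by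
  have hrange : {y : K | δ ≤ ‖y‖ ∧ ‖y‖ ≤ R} ⊆ Set.range ((↑) : Kˣ → K) := fun y hy =>
    ⟨Units.mk0 y (norm_pos_iff.1 (hδ.trans_le hy.1)), rfl⟩
  have hcompact : IsCompact {y : K | δ ≤ ‖y‖ ∧ ‖y‖ ≤ R} := by
    refine (isCompact_closedBall (0 : K) R).of_isClosed_subset ?_ fun y hy => by simpa using hy.2
    exact (isClosed_le continuous_const continuous_norm).inter
      (isClosed_le continuous_norm continuous_const)
  exact Units.isEmbedding_val₀.isInducing.isCompact_preimage' hcompact hrange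

lemma hasCompactSupport_units_iff [ProperSpace K] {f : Kˣ → ℂ} :
    HasCompactSupport f ↔ (∀ᶠ x in comap ((↑) : Kˣ → K) (𝓝 0), f x = 0) ∧
      ∀ᶠ x in comap ((↑) : Kˣ → K) (Bornology.cobounded K), f x = 0 := by
  constructor
  · intro hf
    have himage : IsCompact (((↑) : Kˣ → K) '' tsupport f) := hf.image Units.continuous_val
    have hzero : ∀ x : Kˣ, (x : K) ∈ (((↑) : Kˣ → K) '' tsupport f)ᶜ → f x = 0 := fun x hx =>
      image_eq_zero_of_notMem_tsupport fun h => hx ⟨x, h, rfl⟩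
    refine ⟨?_, ?_⟩
    · refine eventually_comap.2 ?_
      filter_upwards [himage.isClosed.isOpen_compl.mem_nhds
        (x := 0) fun ⟨x, _, hx⟩ => x.ne_zero hx] with y hy x hxy using hzero x (hxy ▸ hy)
    · refine eventually_comap.2 ?_
      filter_upwards [himage.isBounded] with y hy x hxy using hzero x (hxy ▸ hy)
  · rintro ⟨h₀, hinf⟩
    obtain ⟨δ, hδ, h₀⟩ := (Metric.nhds_basis_ball.comap _).eventually_iff.1 h₀
    obtain ⟨R, -, hR⟩ := (hasBasis_cobounded_norm.comap _).eventually_iff.1 hinf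
    refine HasCompactSupport.intro (isCompact_units_annulus hδ R) fun x hx => ?_
    rcases lt_or_ge ‖(x : K)‖ δ with hlt | hge
    · exact h₀ (by simpa using hlt)
    · exact hR (le_of_not_ge fun hle => hx ⟨hge, hle⟩)

end UnitsTopology

section SchwartzSpace

open Aff

variable {K : Type*} [NontriviallyNormedField K] {ψ : AddChar K ℂ}

variable (K) in
/-- Evaluation at `1 ∈ kˣ` on `𝕊`; it identifies the `ψ`-twisted coinvariants of `𝕊` with `ℂ`. -/
def evalOne : SSx K →ₗ[ℂ] ℂ :=
  LinearMap.proj 1 ∘ₗ (SSx K).subtype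

lemma evalOne_apply (f : SSx K) : evalOne K f = f.1 1 := rfl

lemma SRep_apply (hψ : IsLocallyConstant ψ) (g : Aff K) (f : SSx K) (x : Kˣ) :
    (SRep ψ hψ g f).1 x = ψ (g.s * x) * f.1 (x * g.t) := rfl

lemma sTwist_SRep_apply (hψ : IsLocallyConstant ψ) (x₀ b : K) (f : SSx K) (x : Kˣ) :
    (sTwist (SRep ψ hψ) (ψ.mulShift x₀) b f).1 x = ψ.mulShift (x - x₀) b * f.1 x := by
  have hval : (sTwist (SRep ψ hψ) (ψ.mulShift x₀) b f).1 x =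
      ψ (-x₀ * b) * (ψ (b * x) * f.1 (x * 1)) :=
    congrFun (congrArg Subtype.val (sTwist_mulShift_apply x₀ b f)) x
  rw [hval, AddChar.mulShift_apply, sub_eq_neg_add, add_mul, AddChar.map_add_eq_mul, mul_one,
    mul_comm (x : K), mul_assoc]

lemma evalOne_surjective [IsUltrametricDist K] [ProperSpace K] :
    Function.Surjective (evalOne K) := by
  have hclopen : IsClopen {x : Kˣ | (x : K) ∈ Metric.sphere (0 : K) 1} :=
    (IsUltrametricDist.isClopen_sphere (0 : K) one_ne_zero).preimage Units.continuous_val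
  let f : SSx K := ⟨LocallyConstant.charFn ℂ hclopen, LocallyConstant.isLocallyConstant _,
    HasCompactSupport.intro (isCompact_units_annulus one_pos 1) fun x hx => by
      rw [LocallyConstant.coe_charFn, Set.indicator_of_notMem]
      exact fun h => hx (by simp_all)⟩
  have hf : evalOne K f = 1 := (LocallyConstant.charFn_eq_one ℂ 1 hclopen).2 (by simp)
  exact fun c => ⟨c • f, by rw [map_smul, hf, smul_eq_mul, mul_one]⟩

variable [ProperSpace K]

lemma sSmooth_SRep (hψ : IsLocallyConstant ψ) : SSmooth (SRep ψ hψ) := by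
  intro f
  obtain ⟨R, -, hR⟩ := (hasBasis_cobounded_norm.comap _).eventually_iff.1
    (hasCompactSupport_units_iff.1 f.2.2).2
  filter_upwards [eventually_forall_addChar_mul_eq_one hψ R] with b hb
  ext x
  rw [← AddChar.mulShift_zero ψ, sTwist_SRep_apply, sub_zero, AddChar.mulShift_apply]
  rcases le_or_gt R ‖(x : K)‖ with hx | hx
  · rw [hR hx, mul_zero]
  · rw [mul_comm (x : K), hb x hx.le, one_mul]

variable [IsUltrametricDist K]

lemma mem_sTwistKer_SRep_of_eventually (hψ : IsLocallyConstant ψ) (hψne : ψ ≠ 1) {f : SSx K}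
    {x₀ : K} (hf : ∀ᶠ x in comap ((↑) : Kˣ → K) (𝓝 x₀), f.1 x = 0) :
    f ∈ sTwistKer (SRep ψ hψ) (ψ.mulShift x₀) := by
  obtain ⟨b₀, hb₀⟩ := AddChar.ne_one_iff.1 hψne
  obtain ⟨η, hη, hfη⟩ := (Metric.nhds_basis_ball.comap _).eventually_iff.1 hf
  have hsmooth := (sSmooth_SRep hψ).smoothAction_sTwist (isLocallyConstant_mulShift hψ x₀)
  obtain ⟨ε, hε, hεpos⟩ :=
    ((eventually_forall_norm_le (hsmooth f)).and self_mem_nhdsWithin).exists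
  obtain ⟨F, hF⟩ := exists_isBallReps (A := K) (‖b₀‖ / η) hεpos
  rw [sTwistKer_eq_coinvKer]
  refine coinvKerBall_le _ ((mem_coinvKerBall_iff hsmooth hF (by positivity) hε).2 ?_)
  ext x
  have hsum : (actionSum (sTwist (SRep ψ hψ) (ψ.mulShift x₀)) F f).1 x =
      (∑ b ∈ F, ψ.mulShift (x - x₀) b) * f.1 x := by
    rw [actionSum_apply, AddSubmonoidClass.coe_finsetSum, Finset.sum_apply, Finset.sum_mul]
    exact Finset.sum_congr rfl fun b _ => sTwist_SRep_apply hψ x₀ b f x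
  refine hsum.trans (mul_eq_zero.2 (or_iff_not_imp_right.2 fun hfx => ?_))
  have hx : η ≤ ‖(x : K) - x₀‖ := by
    by_contra! hlt
    exact hfx (hfη (by simpa [dist_eq_norm] using hlt))
  have hx₀ : (x : K) - x₀ ≠ 0 := norm_pos_iff.1 (hη.trans_le hx)
  refine hF.sum_addChar_eq_zero (b := b₀ / (x - x₀)) (fun b hb => ?_) ?_ ?_
  · have hfix := congrFun (congrArg Subtype.val (hε b hb)) x
    rw [sTwist_SRep_apply] at hfix
    exact (mul_eq_right₀ hfx).1 hfix
  · rw [norm_div]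
    gcongr
  · rwa [AddChar.mulShift_apply, mul_div_cancel₀ _ hx₀]

lemma sTwistKer_SRep (hψ : IsLocallyConstant ψ) (hψne : ψ ≠ 1) :
    sTwistKer (SRep ψ hψ) ψ = LinearMap.ker (evalOne K) := by
  refine le_antisymm (Submodule.span_le.2 ?_) fun f hf => ?_
  · rintro _ ⟨b, f, rfl⟩
    rw [SetLike.mem_coe, LinearMap.mem_ker, map_sub, map_smul, evalOne_apply, evalOne_apply,
      SRep_apply]
    simp
  · have hmem : f ∈ sTwistKer (SRep ψ hψ) (ψ.mulShift 1) := by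
      refine mem_sTwistKer_SRep_of_eventually hψ hψne ?_
      rw [← Units.val_one, ← Units.isEmbedding_val₀.nhds_eq_comap]
      filter_upwards [f.2.1.eventually_eq 1] with x hx using hx.trans hf
    rwa [AddChar.mulShift_one] at hmem

lemma isCoatom_sTwistKer_SRep (hψ : IsLocallyConstant ψ) (hψne : ψ ≠ 1) :
    IsCoatom (sTwistKer (SRep ψ hψ) ψ) :=
  sTwistKer_SRep hψ hψne ▸ LinearMap.isCoatom_ker_of_surjective evalOne_surjective

lemma sCoinvKer_SRep (hψ : IsLocallyConstant ψ) (hψne : ψ ≠ 1) :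
    sCoinvKer (SRep ψ hψ) = ⊤ := by
  refine eq_top_iff.2 fun f _ => ?_
  have h := mem_sTwistKer_SRep_of_eventually hψ hψne (hasCompactSupport_units_iff.1 f.2.2).1
  rwa [AddChar.mulShift_zero, sTwistKer_eq_coinvKer, ← sCoinvKer_eq_coinvKer] at h

lemma irred_SRep (hψ : IsLocallyConstant ψ) (hψne : ψ ≠ 1) : GRep.Irred (SRep ψ hψ) := by
  refine ⟨evalOne_surjective.nontrivial, fun U hU => ?_⟩
  rcases le_sTwistKer_or_sCoinvKer_le (sSmooth_SRep hψ) hψ hψne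
    (isCoatom_sTwistKer_SRep hψ hψne) hU with hle | hle
  · refine Or.inl ((Submodule.eq_bot_iff _).2 fun f hf => ?_)
    ext x
    have hker := hle (hU (xT x) f hf)
    rw [sTwistKer_SRep hψ hψne, LinearMap.mem_ker, evalOne_apply, SRep_apply] at hker
    simpa using hker
  · rw [sCoinvKer_SRep hψ hψne] at hle
    exact Or.inr (top_le_iff.1 hle)

end SchwartzSpace

section Schur

variable {G : Type*} [Monoid G] {V W : Type*} [AddCommGroup V] [Module ℂ V] [AddCommGroup W]
  [Module ℂ W] {ρ : Representation ℂ G V} {σ : Representation ℂ G W}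

lemma GRep.Irred.iso_of_ne_zero (hρ : GRep.Irred ρ) (hσ : GRep.Irred σ) {f : V →ₗ[ℂ] W}
    (hf : GRep.Equivariant ρ σ f) (hf₀ : f ≠ 0) : GRep.Iso ρ σ := by
  have hker : LinearMap.ker f = ⊥ :=
    (hρ.2 _ (GRep.ker_invariant ρ σ f hf)).resolve_right (LinearMap.ker_eq_top.not.2 hf₀)
  have hrange : LinearMap.range f = ⊤ :=
    (hσ.2 _ (GRep.range_invariant ρ σ f hf)).resolve_left (LinearMap.range_eq_bot.not.2 hf₀)
  exact ⟨.ofBijective f ⟨LinearMap.ker_eq_bot.1 hker, LinearMap.range_eq_top.1 hrange⟩, hf⟩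

end Schur

section Kirillov

open Aff

variable {K : Type*} [NontriviallyNormedField K] {V : Type*} [AddCommGroup V] [Module ℂ V]
  {ρ : Rep K V} {ψ : AddChar K ℂ} {l : V →ₗ[ℂ] ℂ}

/-- The Kirillov model of `V` attached to a linear form `l`, sending `v` to the function
`x ↦ l (x · v)` on `kˣ`. It is equivariant if `l` factors through the `ψ`-twisted coinvariants. -/
def kirillov (ρ : Rep K V) (l : V →ₗ[ℂ] ℂ) : V →ₗ[ℂ] (Kˣ → ℂ) :=
  LinearMap.pi fun x => l ∘ₗ ρ (xT x)

lemma kirillov_apply (v : V) (x : Kˣ) : kirillov ρ l v x = l (ρ (xT x) v) := rfl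

lemma kirillov_apply_one (v : V) : kirillov ρ l v 1 = l v :=
  congrArg l (LinearMap.congr_fun ρ.map_one v)

lemma apply_sS_of_sTwistKer_le_ker (hl : sTwistKer ρ ψ ≤ LinearMap.ker l) (b : K) (v : V) :
    l (ρ (sS b) v) = ψ b * l v := by
  have h : l (ρ (sS b) v - ψ b • v) = 0 := hl (Submodule.subset_span ⟨b, v, rfl⟩)
  rwa [map_sub, map_smul, sub_eq_zero] at h

lemma kirillov_equivariant (hl : sTwistKer ρ ψ ≤ LinearMap.ker l) :
    GRep.Equivariant ρ (repCx K ψ) (kirillov ρ l) := by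
  intro g v
  ext x
  have hcomm : xT x * g = sS (g.s * x) * xT (x * g.t) := by ext <;> simp [mul_comm]
  rw [repCx_apply, kirillov_apply, kirillov_apply, ← Module.End.mul_apply, ← map_mul, hcomm,
    map_mul, Module.End.mul_apply, apply_sS_of_sTwistKer_le_ker hl]

lemma isLocallyConstant_kirillov (hρ : IsSmoothRep ρ) (v : V) :
    IsLocallyConstant (kirillov ρ l v) := by
  refine (IsLocallyConstant.iff_eventually_eq _).2 fun x => ?_
  have htendsto : Tendsto (fun y => x⁻¹ * y) (𝓝 x) (𝓝 1) := by
    simpa using (continuous_const_mul x⁻¹).tendsto x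
  filter_upwards [htendsto.eventually (hρ.eventually_xT v)] with y hy
  have hfactor : (xT y : Aff K) = xT x * xT (x⁻¹ * y) := by ext <;> simp
  rw [kirillov_apply, kirillov_apply, hfactor, map_mul, Module.End.mul_apply, hy]

lemma kirillov_eventually_eq_zero (hρ : SSmooth ρ) (hψne : ψ ≠ 1)
    (hl : sTwistKer ρ ψ ≤ LinearMap.ker l) (v : V) :
    ∀ᶠ x in comap ((↑) : Kˣ → K) (Bornology.cobounded K), kirillov ρ l v x = 0 := by
  obtain ⟨b, hb⟩ := AddChar.ne_one_iff.1 hψne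
  have htendsto : Tendsto (fun y => b * y⁻¹) (Bornology.cobounded K) (𝓝 0) := by
    simpa using tendsto_inv₀_cobounded.const_mul b
  filter_upwards [(htendsto.eventually (hρ v)).comap _] with x hx
  have h := congrFun (kirillov_equivariant hl (sS (b * (x : K)⁻¹)) v) x
  have hψb : kirillov ρ l v x = ψ b * kirillov ρ l v x := by
    simpa [← sTwist_one_apply, hx] using h
  by_contra hne
  exact hb ((right_eq_mul₀ hne).1 hψb)

lemma repCx_sub_mem_SSx [ProperSpace K] (hψ : IsLocallyConstant ψ) {f : Kˣ → ℂ}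
    (hf : IsLocallyConstant f)
    (hinf : ∀ᶠ x in comap ((↑) : Kˣ → K) (Bornology.cobounded K), f x = 0) (b : K) :
    repCx K ψ (sS b) f - f ∈ SSx K := by
  have happly (x : Kˣ) : (repCx K ψ (sS b) f - f) x = (ψ (b * x) - 1) * f x := by
    simp [sub_mul]
  have hlc : IsLocallyConstant fun x : Kˣ => (ψ (b * x) - 1) * f x :=
    ((hψ.comp_continuous (continuous_const.mul Units.continuous_val)).comp (· - 1)).mul hf
  refine ⟨(funext happly : _ = _) ▸ hlc, hasCompactSupport_units_iff.2 ⟨?_, ?_⟩⟩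
  · have hψ₀ : ∀ᶠ y in 𝓝 (0 : K), ψ (y * b) = 1 :=
      (eventually_forall_addChar_mul_eq_one hψ ‖b‖).mono fun y hy => hy b le_rfl
    filter_upwards [hψ₀.comap _] with x hx
    rw [happly, mul_comm b, hx, sub_self, zero_mul]
  · filter_upwards [hinf] with x hx
    rw [happly, hx, mul_zero]

variable [IsUltrametricDist K] [ProperSpace K]

lemma GRep.Irred.iso_SRep (hirr : GRep.Irred ρ) (hρ : IsSmoothRep ρ) (hψ : IsLocallyConstant ψ)
    (hψne : ψ ≠ 1) (htop : sTwistKer ρ ψ ≠ ⊤) : GRep.Iso ρ (SRep ψ hψ) := by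
  obtain ⟨v, hv⟩ : ∃ v, v ∉ sTwistKer ρ ψ := by
    simpa [Submodule.eq_top_iff'] using htop
  obtain ⟨l, hlv, hl⟩ := Submodule.exists_le_ker_of_notMem hv
  obtain ⟨b, hb⟩ := AddChar.ne_one_iff.1 hψne
  have hequiv : GRep.Equivariant ρ (repCx K ψ) (kirillov ρ l) := kirillov_equivariant hl
  let w := ρ (sS b) v - v
  have hw : kirillov ρ l w ∈ SSx K := by
    rw [map_sub, hequiv]
    exact repCx_sub_mem_SSx hψ (isLocallyConstant_kirillov hρ v)
      (kirillov_eventually_eq_zero hρ.sSmooth hψne hl v) b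
  have hlw : l w ≠ 0 := by
    rw [map_sub, apply_sS_of_sTwistKer_le_ker hl, ← sub_one_mul]
    exact mul_ne_zero (sub_ne_zero.2 hb) hlv
  have hcomap : GRep.Invariant ρ ((SSx K).comap (kirillov ρ l)) := fun g u hu => by
    rw [Submodule.mem_comap, hequiv]
    exact SSx_invariant ψ hψ g _ hu
  have hmem : (SSx K).comap (kirillov ρ l) = ⊤ := by
    refine (hirr.2 _ hcomap).resolve_left fun hbot => hlw ?_
    rw [(Submodule.eq_bot_iff _).1 hbot w hw, map_zero]
  refine hirr.iso_of_ne_zero (irred_SRep hψ hψne)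
    (f := (kirillov ρ l).codRestrict (SSx K) (Submodule.eq_top_iff'.1 hmem))
    (fun g u => Subtype.ext (hequiv g u)) fun h₀ => hlw ?_
  rw [← kirillov_apply_one (ρ := ρ)]
  exact congrFun (congrArg Subtype.val (LinearMap.congr_fun h₀ w)) 1

end Kirillov

section Length

open Aff

variable {K : Type*} [Field K] {V W : Type*} [AddCommGroup V] [Module ℂ V] [AddCommGroup W]
  [Module ℂ W] {ρ : Rep K V} {σ : Rep K W} {θ : AddChar K ℂ}

/-- The length, i.e. the possibly infinite dimension, of the twisted coinvariants `V_{S,θ}`. -/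
def sTwistLength (ρ : Rep K V) (θ : AddChar K ℂ) : ℕ∞ :=
  Module.length ℂ (V ⧸ sTwistKer ρ θ)

lemma sTwistLength_eq_zero_iff : sTwistLength ρ θ = 0 ↔ sTwistKer ρ θ = ⊤ := by
  rw [sTwistLength, Module.length_eq_zero_iff, Submodule.Quotient.subsingleton_iff]

lemma sTwistLength_eq_one_iff : sTwistLength ρ θ = 1 ↔ IsCoatom (sTwistKer ρ θ) := by
  rw [sTwistLength, Module.length_eq_one_iff, isSimpleModule_iff_isCoatom]

lemma GRep.Iso.sTwistLength_eq (h : GRep.Iso ρ σ) : sTwistLength ρ θ = sTwistLength σ θ := by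
  obtain ⟨e, he⟩ := h
  exact (Submodule.Quotient.equiv _ _ e
    (sTwistKer_map_of_surjective (f := e.toLinearMap) he e.surjective)).length_eq

lemma irred_subquot {A B : Submodule ℂ V} (hA : GRep.Invariant ρ A) (hB : GRep.Invariant ρ B)
    (hAB : A < B)
    (hmax : ∀ C, GRep.Invariant ρ C → A ≤ C → C ≤ B → C = A ∨ C = B) :
    GRep.Irred (GRep.subquot ρ hA hB) := by
  refine ⟨?_, fun U hU => ?_⟩
  · rw [Submodule.Quotient.nontrivial_iff, Ne, Submodule.comap_subtype_eq_top]
    exact hAB.not_ge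
  let mk := (A.comap B.subtype).mkQ
  have hmap : (U.comap mk).map mk = U := Submodule.map_comap_eq_of_surjective
    (Submodule.mkQ_surjective _) U
  have hcomap : ((U.comap mk).map B.subtype).comap B.subtype = U.comap mk :=
    Submodule.comap_map_eq_of_injective B.subtype_injective _
  have hinv : GRep.Invariant ρ ((U.comap mk).map B.subtype) :=
    GRep.map_invariant _ ρ _ (GRep.sub_equivariant hB) _ fun g v hv => hU g _ hv
  have hle : A ≤ (U.comap mk).map B.subtype :=
    fun a ha => ⟨⟨a, hAB.le ha⟩, Submodule.le_comap_mkQ _ U ha, rfl⟩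
  rcases hmax _ hinv hle (Submodule.map_subtype_le _ _) with hC | hC
  · left
    rw [← hmap, ← hcomap, hC, Submodule.mkQ_map_self]
  · right
    rw [← hmap, ← hcomap, hC, Submodule.comap_subtype_self, Submodule.map_top,
      Submodule.range_mkQ]

end Length

section Degree

open Aff

variable {K : Type*} [NontriviallyNormedField K] [IsUltrametricDist K] [ProperSpace K]
  {V : Type*} [AddCommGroup V] [Module ℂ V] {ρ : Rep K V} {θ ψ : AddChar K ℂ}

lemma sTwistLength_eq_add (hρ : SSmooth ρ) (hθ : IsLocallyConstant θ)
    {V' V'' : Type*} [AddCommGroup V'] [Module ℂ V'] [AddCommGroup V''] [Module ℂ V'']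
    {ρ' : Rep K V'} {ρ'' : Rep K V''} {f : V' →ₗ[ℂ] V} {g : V →ₗ[ℂ] V''}
    (hf : GRep.Equivariant ρ' ρ f) (hg : GRep.Equivariant ρ ρ'' g)
    (hinj : Function.Injective f) (hexact : Function.Exact f g) (hsurj : Function.Surjective g) :
    sTwistLength ρ θ = sTwistLength ρ' θ + sTwistLength ρ'' θ := by
  have hcomap := sTwistKer_comap_of_injective hρ hθ hf hinj
  have hmap := sTwistKer_map_of_surjective (θ := θ) hg hsurj
  have hg_le : sTwistKer ρ θ ≤ (sTwistKer ρ'' θ).comap g := Submodule.map_le_iff_le_comap.1 hmap.le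
  refine Module.length_eq_add_of_exact (Submodule.mapQ _ _ f hcomap.ge)
    (Submodule.mapQ _ _ g hg_le) ?_ ?_ ?_
  · rw [← LinearMap.ker_eq_bot, Submodule.ker_mapQ, hcomap, Submodule.mkQ_map_self]
  · rw [← LinearMap.range_eq_top, Submodule.range_mapQ, LinearMap.range_eq_top.2 hsurj,
      Submodule.map_top, Submodule.range_mkQ]
  · rw [LinearMap.exact_iff, Submodule.ker_mapQ, Submodule.range_mapQ, ← hmap,
      Submodule.comap_map_eq, Submodule.map_sup, Submodule.mkQ_map_self, bot_sup_eq,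
      hexact.linearMap_ker_eq]

lemma CompSeries.sTwistLength_eq_sum (c : CompSeries ρ) (hρ : SSmooth ρ)
    (hθ : IsLocallyConstant θ) :
    sTwistLength ρ θ =
      ∑ i : Fin c.n, sTwistLength (GRep.subquot ρ (c.inv i.1) (c.inv (i.1 + 1))) θ := by
  have hsub (m : ℕ) (hm : m ≤ c.n) : sTwistLength (GRep.sub ρ (c.inv m)) θ =
      ∑ i ∈ Finset.range m, sTwistLength (GRep.subquot ρ (c.inv i) (c.inv (i + 1))) θ := by
    induction m with
    | zero =>
      have : Subsingleton (c.W 0) := Submodule.subsingleton_iff_eq_bot.2 c.bot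
      rw [Finset.sum_range_zero, sTwistLength_eq_zero_iff]
      exact Subsingleton.elim _ _
    | succ m ih =>
      have hle := (c.lt m hm).le
      rw [Finset.sum_range_succ, ← ih (Nat.le_of_succ_le hm)]
      refine sTwistLength_eq_add (hρ.sub _) hθ (f := Submodule.inclusion hle)
        (g := Submodule.mkQ _) (fun _ _ => rfl) (GRep.mkQ_equivariant _ _ _)
        (Submodule.inclusion_injective hle) ?_ (Submodule.mkQ_surjective _)
      rw [LinearMap.exact_iff, Submodule.ker_mkQ, Submodule.range_inclusion]
  have htop : GRep.Iso (GRep.sub ρ (c.inv c.n)) ρ := ⟨.ofTop _ c.top, fun _ _ => rfl⟩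
  rw [← htop.sTwistLength_eq, hsub c.n le_rfl, Finset.sum_range]

lemma GRep.Irred.sTwistLength_eq (hirr : GRep.Irred ρ) (hρ : IsSmoothRep ρ)
    (hψ : IsLocallyConstant ψ) (hψne : ψ ≠ 1) :
    sTwistLength ρ ψ = if GRep.Iso ρ (SRep ψ hψ) then 1 else 0 := by
  split_ifs with hiso
  · rw [hiso.sTwistLength_eq, sTwistLength_eq_one_iff]
    exact isCoatom_sTwistKer_SRep hψ hψne
  · rw [sTwistLength_eq_zero_iff]
    exact by_contra fun htop => hiso (hirr.iso_SRep hρ hψ hψne htop)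

theorem CompSeries.sTwistLength_eq_deg (c : CompSeries ρ) (hρ : IsSmoothRep ρ)
    (hψ : IsLocallyConstant ψ) (hψne : ψ ≠ 1) :
    sTwistLength ρ ψ = c.deg (SRep ψ hψ) := by
  have hirr (i : Fin c.n) : GRep.Irred (GRep.subquot ρ (c.inv i.1) (c.inv (i.1 + 1))) :=
    irred_subquot _ _ (c.lt i i.2) (c.maximal i i.2)
  simp only [c.sTwistLength_eq_sum hρ.sSmooth hψ, (hirr _).sTwistLength_eq
    ((hρ.sub (c.inv _)).quot _) hψ hψne, CompSeries.deg, Finset.card_filter, Nat.cast_sum,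
    Nat.cast_ite, Nat.cast_one, Nat.cast_zero]

end Degree

section Eigenvector

open scoped IsMulCommutative in
lemma exists_ne_zero_forall_apply_eq_smul {k G V : Type*} [Field k] [IsAlgClosed k]
    [CommMonoid G] [AddCommGroup V] [Module k V] [Module.Finite k V] [Nontrivial V]
    (τ : Representation k G V) : ∃ v ≠ 0, ∀ g, ∃ a : k, τ g v = a • v := by
  have : Nontrivial τ.asModule := inferInstanceAs (Nontrivial V)
  have : IsArtinian (MonoidAlgebra k G) τ.asModule := isArtinian_of_tower k inferInstance
  obtain ⟨N, hN⟩ := IsAtomic.exists_atom (Submodule (MonoidAlgebra k G) τ.asModule)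
  have : IsSimpleModule (MonoidAlgebra k G) N := isSimpleModule_iff_isAtom.2 hN
  have : Module.Finite k N :=
    .of_injective (N.subtype.restrictScalars k) N.subtype_injective
  have hfin : Module.finrank k N = 1 :=
    IsSimpleModule.finrank_eq_one_of_isMulCommutative (MonoidAlgebra k G) N k
  obtain ⟨v, hv, hspan⟩ := finrank_eq_one_iff'.1 hfin
  refine ⟨τ.asModuleEquiv v.1, fun h => hv (Subtype.ext h), fun g => ?_⟩
  obtain ⟨a, ha⟩ := hspan (MonoidAlgebra.single g (1 : k) • v)
  have hsingle := τ.single_smul 1 g v.1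
  rw [one_smul] at hsingle
  exact ⟨a, hsingle.symm.trans (congrArg Subtype.val ha).symm⟩

lemma exists_monoidHom_forall_apply_eq_smul {k G V : Type*} [Field k] [Monoid G]
    [AddCommGroup V] [Module k V] {τ : Representation k G V} {v : V} (hv : v ≠ 0)
    (h : ∀ g, ∃ a : k, τ g v = a • v) : ∃ χ : G →* k, ∀ g, τ g v = χ g • v := by
  choose χ hχ using h
  refine ⟨⟨⟨χ, ?_⟩, fun g g' => ?_⟩, hχ⟩ <;> rw [← smul_left_inj hv, ← hχ]
  · rw [map_one, Module.End.one_apply, one_smul]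
  · rw [map_mul, Module.End.mul_apply, hχ g', map_smul, hχ g, smul_smul, mul_comm]

end Eigenvector

section Perfect

open Aff

variable {K : Type*} [Field K] [TopologicalSpace K]

lemma exists_smoothMulChar_tEigenT_ne_bot {X : Type*} [AddCommGroup X] [Module ℂ X]
    [Module.Finite ℂ X] [Nontrivial X] {τ : Representation ℂ Kˣ X} (hτ : TIsSmooth τ) :
    ∃ χ, SmoothMulChar χ ∧ tEigenT τ χ ≠ ⊥ := by
  obtain ⟨v, hv, hscalar⟩ := exists_ne_zero_forall_apply_eq_smul τ
  obtain ⟨χ, hχ⟩ := exists_monoidHom_forall_apply_eq_smul hv hscalar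
  refine ⟨χ.toHomUnits, ?_, fun hbot => hv ((Submodule.eq_bot_iff _).1 hbot v hχ)⟩
  have hiff (u : Kˣ) : χ.toHomUnits u = 1 ↔ τ u v = v := by
    rw [hχ, Units.ext_iff, MonoidHom.coe_toHomUnits, Units.val_one, ← smul_left_inj hv, one_smul]
  simpa only [SmoothMulChar, hiff] using hτ v

lemma IsSmoothRep.tIsSmooth {V : Type*} [AddCommGroup V] [Module ℂ V] {ρ : Rep K V}
    (hρ : IsSmoothRep ρ) : TIsSmooth (ρ.comp xTHom) :=
  fun v => (hρ v).preimage continuous_xT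

lemma Perfect.eq_bot_of_finite {V : Type*} [AddCommGroup V] [Module ℂ V] {ρ : Rep K V}
    (hperf : Perfect ρ) (hρ : IsSmoothRep ρ) {U : Submodule ℂ V} [Module.Finite ℂ U]
    (hU : GRep.Invariant ρ U) : U = ⊥ := by
  by_contra hne
  have : Nontrivial U := Submodule.nontrivial_iff_ne_bot.2 hne
  obtain ⟨χ, hχ, hbot⟩ := exists_smoothMulChar_tEigenT_ne_bot (hρ.sub hU).tIsSmooth
  obtain ⟨v, hv, hv₀⟩ := Submodule.exists_mem_ne_zero_of_ne_bot hbot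
  have hmem : v.1 ∈ tEigen ρ χ := fun u => congrArg Subtype.val (hv u)
  rw [hperf χ hχ] at hmem
  exact hv₀ (Subtype.ext hmem)

end Perfect

section Morphisms

open Aff

variable {K : Type*} [Field K] {V W : Type*} [AddCommGroup V] [Module ℂ V]
  [AddCommGroup W] [Module ℂ W] {ρ : Rep K V} {σ : Rep K W} {φ : V →ₗ[ℂ] W}

lemma sCoinvKer_eq_bot (h : ∀ b v, ρ (sS b) v = v) : sCoinvKer ρ = ⊥ := by
  rw [eq_bot_iff, sCoinvKer, Submodule.span_le]
  rintro _ ⟨b, v, rfl⟩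
  rw [h, sub_self]
  exact zero_mem _

lemma range_le_sInv_of_sCoinvKer_le_ker (hφ : GRep.Equivariant ρ σ φ)
    (hle : sCoinvKer ρ ≤ LinearMap.ker φ) : LinearMap.range φ ≤ sInv σ := by
  rintro _ ⟨v, rfl⟩ b
  have h : φ (ρ (sS b) v - v) = 0 := hle (Submodule.subset_span ⟨b, v, rfl⟩)
  rw [← hφ, ← sub_eq_zero, ← map_sub, h]

lemma finite_range_of_sCoinvKer_le_ker [Module.Finite ℂ (V ⧸ sCoinvKer ρ)]
    (hle : sCoinvKer ρ ≤ LinearMap.ker φ) : Module.Finite ℂ (LinearMap.range φ) := by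
  rw [← (sCoinvKer ρ).range_liftQ φ hle]
  infer_instance

lemma range_piZeroMap (hφ : GRep.Equivariant ρ σ φ) :
    LinearMap.range (piZeroMap ρ σ φ hφ) = (LinearMap.range φ).map (sCoinvKer σ).mkQ :=
  Submodule.range_mapQ _ _ _ _

lemma iso_quot_range_piZeroMap (hφ : GRep.Equivariant ρ σ φ)
    (hle : sCoinvKer σ ≤ LinearMap.range φ) :
    GRep.Iso (GRep.quot σ (LinearMap.range φ) (GRep.range_invariant ρ σ φ hφ))
      (GRep.quot (piZeroRep σ) (LinearMap.range (piZeroMap ρ σ φ hφ))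
        (GRep.range_invariant _ _ _ (piZeroMap_equivariant ρ σ φ hφ))) := by
  refine ⟨(Submodule.quotientQuotientEquivQuotient _ _ hle).symm ≪≫ₗ
    Submodule.quotEquivOfEq _ _ (range_piZeroMap hφ).symm, fun g x => ?_⟩
  obtain ⟨w, rfl⟩ := Submodule.Quotient.mk_surjective _ x
  rfl

end Morphisms

section DegreeOne

open Aff

variable {K : Type*} [NontriviallyNormedField K] [IsUltrametricDist K] [ProperSpace K]
  {V W : Type*} [AddCommGroup V] [Module ℂ V] [AddCommGroup W] [Module ℂ W] {ρ : Rep K V}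
  {σ : Rep K W} {ψ : AddChar K ℂ} {φ : V →ₗ[ℂ] W}

lemma injective_piZeroMap (hσ : SSmooth σ) (hφ : GRep.Equivariant ρ σ φ)
    (hinj : Function.Injective φ) : Function.Injective (piZeroMap ρ σ φ hφ) := by
  rw [← LinearMap.ker_eq_bot, piZeroMap, Submodule.ker_mapQ,
    sCoinvKer_comap_of_injective hσ hφ hinj, Submodule.mkQ_map_self]

lemma sS_apply_eq_self_of_le_sTwistKer (hρ : SSmooth ρ) (hψ : IsLocallyConstant ψ) (hψne : ψ ≠ 1)
    {U : Submodule ℂ V} (hU : GRep.Invariant ρ U) (hle : U ≤ sTwistKer ρ ψ) (b : K) (u : U) :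
    GRep.sub ρ hU (sS b) u = u := by
  refine sS_apply_eq_self_of_sTwistKer_eq_top (hρ.sub hU) hψ hψne ?_ b u
  rw [← sTwistKer_comap_of_injective hρ hψ (GRep.sub_equivariant hU) U.subtype_injective,
    Submodule.comap_subtype_eq_top]
  exact hle

lemma finite_of_le_sTwistKer [Module.Finite ℂ (V ⧸ sCoinvKer ρ)] (hρ : SSmooth ρ)
    (hψ : IsLocallyConstant ψ) (hψne : ψ ≠ 1) {U : Submodule ℂ V} (hU : GRep.Invariant ρ U)
    (hle : U ≤ sTwistKer ρ ψ) : Module.Finite ℂ U := by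
  refine .of_injective ((sCoinvKer ρ).mkQ ∘ₗ U.subtype) (LinearMap.ker_eq_bot.1 ?_)
  rw [LinearMap.ker_comp, Submodule.ker_mkQ,
    sCoinvKer_comap_of_injective hρ (GRep.sub_equivariant hU) U.subtype_injective]
  exact sCoinvKer_eq_bot (sS_apply_eq_self_of_le_sTwistKer hρ hψ hψne hU hle)

lemma sCoinvKer_le_range_of_injective (hσ : SSmooth σ) (hψ : IsLocallyConstant ψ) (hψne : ψ ≠ 1)
    (hρ_coatom : IsCoatom (sTwistKer ρ ψ)) (hσ_coatom : IsCoatom (sTwistKer σ ψ))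
    (hφ : GRep.Equivariant ρ σ φ) (hinj : Function.Injective φ) :
    sCoinvKer σ ≤ LinearMap.range φ := by
  refine (le_sTwistKer_or_sCoinvKer_le hσ hψ hψne hσ_coatom
    (GRep.range_invariant ρ σ φ hφ)).resolve_left fun hle => hρ_coatom.1 ?_
  rw [← sTwistKer_comap_of_injective hσ hψ hφ hinj]
  exact LinearMap.range_le_iff_comap.1 hle

theorem statement13_general (hψ : IsLocallyConstant ψ) (hψne : ψ ≠ 1) (hρ : IsSmoothRep ρ)
    (hρ_deg : sTwistLength ρ ψ = 1) (hperf : Perfect ρ) [Module.Finite ℂ (V ⧸ sCoinvKer ρ)]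
    (hσ : SSmooth σ) (hσ_deg : sTwistLength σ ψ = 1) (hφ : GRep.Equivariant ρ σ φ) :
    ((Module.Finite ℂ (LinearMap.range φ) ∧ LinearMap.range φ ≤ sInv σ) ∨
      Function.Injective φ) ∧
    (Function.Injective φ →
      Function.Injective (piZeroMap ρ σ φ hφ) ∧
      GRep.Iso (GRep.quot σ (LinearMap.range φ) (GRep.range_invariant ρ σ φ hφ))
        (GRep.quot (piZeroRep σ) (LinearMap.range (piZeroMap ρ σ φ hφ))
          (GRep.range_invariant _ _ _ (piZeroMap_equivariant ρ σ φ hφ)))) := by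
  rw [sTwistLength_eq_one_iff] at hρ_deg hσ_deg
  have hker := GRep.ker_invariant ρ σ φ hφ
  refine ⟨?_, fun hinj => ⟨injective_piZeroMap hσ hφ hinj, iso_quot_range_piZeroMap hφ
    (sCoinvKer_le_range_of_injective hσ hψ hψne hρ_deg hσ_deg hφ hinj)⟩⟩
  rcases le_sTwistKer_or_sCoinvKer_le hρ.sSmooth hψ hψne hρ_deg hker with hle | hle
  · have := finite_of_le_sTwistKer hρ.sSmooth hψ hψne hker hle
    exact .inr (LinearMap.ker_eq_bot.1 (hperf.eq_bot_of_finite hρ hker))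
  · exact .inl ⟨finite_range_of_sCoinvKer_le_ker hle, range_le_sInv_of_sCoinvKer_le_ker hφ hle⟩

end DegreeOne

section Statements

open Aff

variable {K : Type*} [NontriviallyNormedField K] [IsUltrametricDist K] [ProperSpace K]

theorem statement13
    (hchar : (2 : K) ≠ 0)
    (ψ : AddChar K ℂ) (hψlc : IsLocallyConstant (⇑ψ)) (hψne : ψ ≠ 1)
    {X EX V : Type*} [AddCommGroup X] [Module ℂ X] [Module.Finite ℂ X]
    [AddCommGroup EX] [Module ℂ EX] [AddCommGroup V] [Module ℂ V]
    (τX : Representation ℂ Kˣ X) (hτX : TIsSmooth τX) (hXcyc : TCyclic τX)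
    (ρE : Rep K EX) (hρE : IsSmoothRep ρE) (cE : CompSeries ρE)
    (hEdeg : cE.deg (SRep ψ hψlc) = 1) (hEperf : Perfect ρE)
    (hEpi0 : GRep.Iso (piZeroT ρE) τX)
    (ρM : Rep K V) (hρM : IsSmoothRep ρM) (cM : CompSeries ρM)
    (hMdeg : cM.deg (SRep ψ hψlc) = 1)
    (φ : EX →ₗ[ℂ] V) (hφ : GRep.Equivariant ρE ρM φ) :
    ((Module.Finite ℂ ↥(LinearMap.range φ) ∧ LinearMap.range φ ≤ sInv ρM) ∨
      Function.Injective φ) ∧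
    (Function.Injective φ →
      Function.Injective (piZeroMap ρE ρM φ hφ) ∧
      GRep.Iso
        (GRep.quot ρM (LinearMap.range φ) (GRep.range_invariant ρE ρM φ hφ))
        (GRep.quot (piZeroRep ρM) (LinearMap.range (piZeroMap ρE ρM φ hφ))
          (GRep.range_invariant (piZeroRep ρE) (piZeroRep ρM) (piZeroMap ρE ρM φ hφ)
            (piZeroMap_equivariant ρE ρM φ hφ)))) := by
  have : Module.Finite ℂ (EX ⧸ sCoinvKer ρE) := .equiv hEpi0.choose.symm
  exact statement13_general hψlc hψne hρE
    ((cE.sTwistLength_eq_deg hρE hψlc hψne).trans (by rw [hEdeg, Nat.cast_one])) hEperf hρM.sSmooth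
    ((cM.sTwistLength_eq_deg hρM hψlc hψne).trans (by rw [hMdeg, Nat.cast_one])) hφ

end Statements

end PSW
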